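/- arXiv:2502.05081 — 3 statements merged into one kernel-verified Lean document; each statement's English description precedes it below -/
import Mathlib

section
/- Let D ⊂ ℝ² be open and bounded with closure contained in (0,∞)². Then there exists a constant C̃ > 0 such that for every α > 0, every (k,h), (k̄,h̄) ∈ D, every v ∈ ℝ, and all real symmetric 2×2 matrices Q, Q̄ satisfying the block matrix inequality [[Q, 0],[0, −Q̄]] ≤ 3α·[[I, −I],[−I, I]] in the positive-semidefinite (Loewner) order on symmetric 4×4 matrices (I the 2×2 identity), one has F̃(Q, α·(k−k̄, h−h̄), v, (k,h)) − F̃(Q̄, α·(k−k̄, h−h̄), v, (k̄,h̄)) ≤ C̃·( α·|(k−k̄, h−h̄)|² + |(k−k̄, h−h̄)| ), where |·| is the Euclidean norm on ℝ². -/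
open MeasureTheory ProbabilityTheory Real Set Matrix
open scoped ENNReal NNReal

noncomputable section

namespace HabitModel

/-- The function `g(c; h, p_k, p_h) = -c·(p_k - ρ·p_h) - (1/(σ-1))·(h^γ/c)^(σ-1)`. -/
def gFun (ρ σ γ : ℝ) (c h pk ph : ℝ) : ℝ :=
  -c * (pk - ρ * ph) - (σ - 1)⁻¹ * (h ^ γ / c) ^ (σ - 1)

/-- The maximized Hamiltonian term `G(k,h,p_k,p_h)`. -/
def GFun (ρ σ γ R : ℝ) (k h pk ph : ℝ) : ℝ :=
  if pk - ρ * ph ≤ h ^ (γ * (σ - 1)) * (R * k) ^ (-σ) then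
    -(R * k) * (pk - ρ * ph) - (σ - 1)⁻¹ * (h ^ γ / (R * k)) ^ (σ - 1)
  else
    -(1 + (σ - 1)⁻¹) * (h ^ γ * (pk - ρ * ph)) ^ (1 - 1 / σ)

/-- The maximum value Hamiltonian `H_max(k,h,p,Q)` (only the diagonal entries of `Q` enter). -/
def Hmax (B β₁ β₂ ρ σ γ R : ℝ) (k h : ℝ) (p : ℝ × ℝ)
    (Q : Matrix (Fin 2) (Fin 2) ℝ) : ℝ :=
  B * k * p.1 - ρ * h * p.2 + (1 / 2) * β₁ ^ 2 * k ^ 2 * Q 0 0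
    + (1 / 2) * β₂ ^ 2 * h ^ 2 * Q 1 1 + GFun ρ σ γ R k h p.1 p.2

/-- `F̃(Q, p, v, (k,h)) = -θ·v + H_max(k,h,p,Q)`. -/
def Ftilde (B β₁ β₂ ρ θ σ γ R : ℝ) (Q : Matrix (Fin 2) (Fin 2) ℝ)
    (p : ℝ × ℝ) (v : ℝ) (z : ℝ × ℝ) : ℝ :=
  -θ * v + Hmax B β₁ β₂ ρ σ γ R z.1 z.2 p Q

lemma aux_tangent (s t : ℝ) (hs : 1 < s) (ht : 0 < t) : 1 + (1 - s) * (t - 1) ≤ t ^ (1 - s) := by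
  rw [Real.rpow_def_of_pos ht]
  have h1 := Real.add_one_le_exp (Real.log t * (1 - s))
  have h2 := Real.log_le_sub_one_of_pos ht
  nlinarith

lemma aux_thr (σ γ m h : ℝ) (hm : 0 < m) (hh : 0 < h) :
    h ^ (γ * (σ - 1)) * m ^ (-σ) = (h ^ γ / m) ^ (σ - 1) / m := by
  have hu : 0 < h ^ γ := Real.rpow_pos_of_pos hh _
  rw [Real.rpow_mul hh.le, Real.div_rpow hu.le hm.le, Real.rpow_sub hm, Real.rpow_neg hm.le,
    Real.rpow_one]
  field_simp

lemma aux_val (σ u m q : ℝ) (hσ : 1 < σ) (hm : 0 < m) (hu : 0 < u) (hq : 0 < q) :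
    (u * q) ^ (1 - 1 / σ) = m * q * ((u / m) ^ (σ - 1) / (m * q)) ^ (1 / σ) := by
  have hp : 0 < (u / m) ^ (σ - 1) := Real.rpow_pos_of_pos (by positivity) _
  have hs : σ ≠ 0 := by linarith
  apply Real.log_injOn_pos
  · exact Real.rpow_pos_of_pos (by positivity) _
  · exact mul_pos (by positivity) (Real.rpow_pos_of_pos (by positivity) _)
  rw [Real.log_rpow (by positivity), Real.log_mul hu.ne' hq.ne',
    Real.log_mul (by positivity) (Real.rpow_pos_of_pos (by positivity) _).ne',
    Real.log_rpow (by positivity), Real.log_div hp.ne' (by positivity),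
    Real.log_rpow (by positivity), Real.log_div hu.ne' hm.ne', Real.log_mul hm.ne' hq.ne']
  field_simp
  ring

lemma aux_t0 (σ φ w : ℝ) (hσ : 1 < σ) (hφ : 0 < φ) (hw : 0 < w) :
    φ * ((φ / w) ^ (1 / σ)) ^ (1 - σ) = w * (φ / w) ^ (1 / σ) := by
  have hp : 0 < (φ / w) ^ (1 / σ) := Real.rpow_pos_of_pos (by positivity) _
  have hs : σ ≠ 0 := by linarith
  have h1 : ((φ / w) ^ (1 / σ)) ^ σ = φ / w := by
    rw [← Real.rpow_mul (by positivity)]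
    simp [hs]
  rw [Real.rpow_sub hp, h1, Real.rpow_one]
  field_simp

lemma G_spec (ρ σ γ R k h pk ph : ℝ) (hσ : 1 < σ) (hR : 0 < R) (hk : 0 < k) (hh : 0 < h) :
    (∃ t : ℝ, 0 < t ∧ t ≤ 1 ∧ GFun ρ σ γ R k h pk ph = -(t * (R * k) * (pk - ρ * ph))
        - (σ - 1)⁻¹ * (t ^ (1 - σ) * (h ^ γ / (R * k)) ^ (σ - 1)) ∧
      t ^ (1 - σ) ≤ 1 + (R * k) / (h ^ γ / (R * k)) ^ (σ - 1) * |pk - ρ * ph|) ∧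
    (∀ t : ℝ, 0 < t → t ≤ 1 → -(t * (R * k) * (pk - ρ * ph))
        - (σ - 1)⁻¹ * (t ^ (1 - σ) * (h ^ γ / (R * k)) ^ (σ - 1)) ≤ GFun ρ σ γ R k h pk ph) := by
  have hm : 0 < R * k := mul_pos hR hk
  have hu : 0 < h ^ γ := Real.rpow_pos_of_pos hh _
  unfold GFun
  rw [aux_thr σ γ (R * k) h hm hh]
  generalize pk - ρ * ph = q
  generalize R * k = m at *
  generalize h ^ γ = u at *
  have hφ : 0 < (u / m) ^ (σ - 1) := Real.rpow_pos_of_pos (by positivity) _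
  have hval := fun hq => aux_val σ u m q hσ hm hu hq
  generalize (u / m) ^ (σ - 1) = φ at *
  have hs : 0 < σ - 1 := by linarith
  split_ifs with hc
  · rw [le_div_iff₀ hm] at hc
    constructor
    · refine ⟨1, one_pos, le_rfl, ?_, ?_⟩
      · simp
      · rw [Real.one_rpow]
        have : 0 ≤ m / φ * |q| := by positivity
        linarith
    · intro t ht ht1
      have h1 := aux_tangent σ t hσ ht
      have h2 : (σ - 1)⁻¹ * (φ * (1 + (1 - σ) * (t - 1))) ≤ (σ - 1)⁻¹ * (t ^ (1 - σ) * φ) := by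
        rw [mul_comm φ]; gcongr
      have h3 : (σ - 1)⁻¹ * (φ * (1 + (1 - σ) * (t - 1))) = (σ - 1)⁻¹ * φ - φ * (t - 1) := by
        field_simp; ring
      nlinarith
  · rw [not_le, div_lt_iff₀ hm] at hc
    have hq : 0 < q := by
      by_contra hq
      nlinarith
    have hw : 0 < m * q := by positivity
    rw [hval hq]
    have ht0 := aux_t0 σ φ (m * q) hσ hφ hw
    have htp : 0 < (φ / (m * q)) ^ (1 / σ) := Real.rpow_pos_of_pos (by positivity) _
    have ht1 : (φ / (m * q)) ^ (1 / σ) ≤ 1 := by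
      apply Real.rpow_le_one (by positivity)
      · rw [div_le_one hw]; linarith
      · have : 0 < σ := by linarith
        positivity
    generalize (φ / (m * q)) ^ (1 / σ) = τ at *
    constructor
    · refine ⟨τ, htp, ht1, ?_, ?_⟩
      · rw [mul_comm _ φ, ht0]; ring
      · rw [abs_of_pos hq]
        have : τ ^ (1 - σ) = m / φ * q * τ := by
          field_simp
          linarith
        rw [this]
        have : 0 < m / φ * q := by positivity
        nlinarith
    · intro t ht ht1
      have h1 := aux_tangent σ (t / τ) hσ (by positivity)
      rw [Real.div_rpow ht.le htp.le] at h1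
      have hτp : 0 < τ ^ (1 - σ) := Real.rpow_pos_of_pos htp _
      rw [le_div_iff₀ hτp] at h1
      have h2 : (σ - 1)⁻¹ * (φ * ((1 + (1 - σ) * (t / τ - 1)) * τ ^ (1 - σ)))
          ≤ (σ - 1)⁻¹ * (t ^ (1 - σ) * φ) := by
        rw [mul_comm φ]; gcongr
      have h3 : (σ - 1)⁻¹ * (φ * ((1 + (1 - σ) * (t / τ - 1)) * τ ^ (1 - σ)))
          = (σ - 1)⁻¹ * (m * q * τ) - m * q * (t - τ) := by
        calc _ = (σ - 1)⁻¹ * ((1 + (1 - σ) * (t / τ - 1)) * (φ * τ ^ (1 - σ))) := by ring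
          _ = _ := by rw [ht0]; field_simp; ring
      linarith

lemma phi_bounds (σ γ R : ℝ) (hR : 0 < R) (K : Set (ℝ × ℝ)) (hK : IsCompact K)
    (hKs : K ⊆ Set.Ioi (0:ℝ) ×ˢ Set.Ioi (0:ℝ)) :
    ∃ L M : ℝ, 0 ≤ L ∧ 0 ≤ M ∧
      (∀ z ∈ K, ∀ z' ∈ K, |(z'.2 ^ γ / (R * z'.1)) ^ (σ - 1) - (z.2 ^ γ / (R * z.1)) ^ (σ - 1)|
        ≤ L * Real.sqrt ((z.1 - z'.1) ^ 2 + (z.2 - z'.2) ^ 2)) ∧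
      (∀ z ∈ K, (R * z.1) / (z.2 ^ γ / (R * z.1)) ^ (σ - 1) ≤ M) := by
  have hcd : ∀ z ∈ K, ContDiffAt ℝ 1 (fun z : ℝ × ℝ => (z.2 ^ γ / (R * z.1)) ^ (σ - 1)) z := by
    intro z hz
    obtain ⟨h1, h2⟩ := hKs hz
    simp only [Set.mem_Ioi] at h1 h2
    have hu : 0 < z.2 ^ γ := Real.rpow_pos_of_pos h2 _
    refine ContDiffAt.rpow_const_of_ne (ContDiffAt.div ?_ ?_ (by positivity)) (by positivity)
    · exact contDiffAt_snd.rpow_const_of_ne h2.ne'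
    · exact contDiffAt_const.mul contDiffAt_fst
  have hll : LocallyLipschitzOn K (fun z : ℝ × ℝ => (z.2 ^ γ / (R * z.1)) ^ (σ - 1)) := by
    intro z hz
    obtain ⟨L, t, ht, hL⟩ := (hcd z hz).exists_lipschitzOnWith
    exact ⟨L, t, mem_nhdsWithin_of_mem_nhds ht, hL⟩
  obtain ⟨L, hL⟩ := LocallyLipschitzOn.exists_lipschitzOnWith_of_compact hK hll
  have hcont : ContinuousOn
      (fun z : ℝ × ℝ => (R * z.1) / (z.2 ^ γ / (R * z.1)) ^ (σ - 1)) K := by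
    refine ContinuousOn.div (by fun_prop) hll.continuousOn ?_
    intro z hz
    obtain ⟨h1, h2⟩ := hKs hz
    simp only [Set.mem_Ioi] at h1 h2
    have hu : 0 < z.2 ^ γ := Real.rpow_pos_of_pos h2 _
    exact (Real.rpow_pos_of_pos (by positivity) _).ne'
  obtain ⟨M, hM⟩ := hK.exists_bound_of_continuousOn hcont
  refine ⟨L, |M|, L.2, abs_nonneg _, ?_, ?_⟩
  · intro z hz z' hz'
    have h := hL.dist_le_mul z' hz' z hz
    rw [Real.dist_eq] at h
    refine h.trans (mul_le_mul_of_nonneg_left ?_ L.2)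
    rw [Prod.dist_eq, Real.dist_eq, Real.dist_eq]
    refine max_le ?_ ?_
    · apply Real.abs_le_sqrt
      nlinarith [sq_nonneg (z.2 - z'.2)]
    · apply Real.abs_le_sqrt
      nlinarith [sq_nonneg (z.1 - z'.1)]
  · intro z hz
    exact ((le_abs_self _).trans (hM z hz)).trans (le_abs_self _)

lemma mat_bound (α : ℝ) (Q Q' : Matrix (Fin 2) (Fin 2) ℝ)
    (hP : ((3 * α) • Matrix.fromBlocks (1 : Matrix (Fin 2) (Fin 2) ℝ) (-1) (-1) 1 -
            Matrix.fromBlocks Q 0 0 (-Q')).PosSemidef) (i : Fin 2) (x y : ℝ) :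
    x ^ 2 * Q i i - y ^ 2 * Q' i i ≤ 3 * α * (x - y) ^ 2 := by
  have h := hP.dotProduct_mulVec_nonneg (Sum.elim (Pi.single i x) (Pi.single i y))
  fin_cases i <;>
  · simp [dotProduct, Matrix.mulVec, Fintype.sum_sum_type, Fin.sum_univ_two, Pi.single_apply,
      Matrix.one_apply] at h
    simp
    nlinarith

set_option maxHeartbeats 1000000

/-- Structural estimate on `F̃` used for the comparison principle: under the standard block
matrix inequality `[[Q,0],[0,-Q̄]] ≤ 3α·[[I,-I],[-I,I]]` one has
`F̃(Q, α(z-z̄), v, z) - F̃(Q̄, α(z-z̄), v, z̄) ≤ C̃(α·|z-z̄|² + |z-z̄|)`. -/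
theorem Ftilde_structural (B β₁ β₂ ρ θ σ γ R : ℝ) (hB : 0 ≤ B) (hβ₁ : 0 < β₁)
    (hβ₂ : 0 < β₂) (hρ₀ : 0 < ρ) (hρ₁ : ρ < 1) (hθ : 0 < θ) (hσ : 1 < σ)
    (hγ₀ : 0 ≤ γ) (hγ₁ : γ < 1) (hR : 0 < R)
    (D : Set (ℝ × ℝ)) (hDopen : IsOpen D) (hDbdd : Bornology.IsBounded D)
    (hDcl : closure D ⊆ Set.Ioi (0:ℝ) ×ˢ Set.Ioi (0:ℝ)) :
    ∃ C > (0:ℝ), ∀ α : ℝ, 0 < α → ∀ z z' : ℝ × ℝ, z ∈ D → z' ∈ D → ∀ v : ℝ,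
      ∀ Q Q' : Matrix (Fin 2) (Fin 2) ℝ, Q.IsSymm → Q'.IsSymm →
        ((3 * α) • Matrix.fromBlocks (1 : Matrix (Fin 2) (Fin 2) ℝ) (-1) (-1) 1 -
            Matrix.fromBlocks Q 0 0 (-Q')).PosSemidef →
        Ftilde B β₁ β₂ ρ θ σ γ R Q (α * (z.1 - z'.1), α * (z.2 - z'.2)) v z -
            Ftilde B β₁ β₂ ρ θ σ γ R Q' (α * (z.1 - z'.1), α * (z.2 - z'.2)) v z'
          ≤ C * (α * ((z.1 - z'.1) ^ 2 + (z.2 - z'.2) ^ 2) +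
              Real.sqrt ((z.1 - z'.1) ^ 2 + (z.2 - z'.2) ^ 2)) := by
  obtain ⟨L, M, hL0, hM0, hL, hM⟩ := phi_bounds σ γ R hR (closure D)
    hDbdd.isCompact_closure hDcl
  have hs : 0 < (σ - 1)⁻¹ := inv_pos.2 (by linarith)
  refine ⟨B + 3 / 2 * β₁ ^ 2 + 3 / 2 * β₂ ^ 2 + 2 * R + (σ - 1)⁻¹ * L * (1 + 2 * M) + 1,
    by positivity, ?_⟩
  intro α hα z z' hz hz' v Q Q' _ _ hP
  have hzc := subset_closure hz
  have hzc' := subset_closure hz'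
  obtain ⟨hk, hh⟩ := hDcl hzc
  obtain ⟨hk', hh'⟩ := hDcl hzc'
  simp only [Set.mem_Ioi] at hk hh hk' hh'
  have hm1 := mat_bound α Q Q' hP 0 z.1 z'.1
  have hm2 := mat_bound α Q Q' hP 1 z.2 z'.2
  have hLz := hL z hzc z' hzc'
  have hMz := hM z hzc
  obtain ⟨⟨t, ht0, ht1, hGt, htb⟩, -⟩ := G_spec ρ σ γ R z.1 z.2 (α * (z.1 - z'.1))
    (α * (z.2 - z'.2)) hσ hR hk hh
  have hG' := (G_spec ρ σ γ R z'.1 z'.2 (α * (z.1 - z'.1))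
    (α * (z.2 - z'.2)) hσ hR hk' hh').2 t ht0 ht1
  unfold Ftilde Hmax
  simp only
  rw [hGt]
  generalize GFun ρ σ γ R z'.1 z'.2 (α * (z.1 - z'.1)) (α * (z.2 - z'.2)) = G' at *
  generalize (z'.2 ^ γ / (R * z'.1)) ^ (σ - 1) = φ' at *
  generalize (z.2 ^ γ / (R * z.1)) ^ (σ - 1) = φ at *
  have hd0 : 0 ≤ Real.sqrt ((z.1 - z'.1) ^ 2 + (z.2 - z'.2) ^ 2) := Real.sqrt_nonneg _
  have hdd : Real.sqrt ((z.1 - z'.1) ^ 2 + (z.2 - z'.2) ^ 2) ^ 2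
    = (z.1 - z'.1) ^ 2 + (z.2 - z'.2) ^ 2 := Real.sq_sqrt (by positivity)
  have ha1 : |z.1 - z'.1| ≤ Real.sqrt ((z.1 - z'.1) ^ 2 + (z.2 - z'.2) ^ 2) :=
    Real.abs_le_sqrt (le_add_of_nonneg_right (sq_nonneg _))
  have ha2 : |z.2 - z'.2| ≤ Real.sqrt ((z.1 - z'.1) ^ 2 + (z.2 - z'.2) ^ 2) :=
    Real.abs_le_sqrt (le_add_of_nonneg_left (sq_nonneg _))
  generalize Real.sqrt ((z.1 - z'.1) ^ 2 + (z.2 - z'.2) ^ 2) = d at *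
  have hq : |α * (z.1 - z'.1) - ρ * (α * (z.2 - z'.2))| ≤ 2 * (α * d) := by
    have e : α * (z.1 - z'.1) - ρ * (α * (z.2 - z'.2))
        = α * ((z.1 - z'.1) - ρ * (z.2 - z'.2)) := by ring
    rw [e, abs_mul, abs_of_pos hα]
    have : |(z.1 - z'.1) - ρ * (z.2 - z'.2)| ≤ 2 * d := by
      refine (abs_sub _ _).trans ?_
      rw [abs_mul, abs_of_pos hρ₀]
      have := mul_le_of_le_one_left (abs_nonneg (z.2 - z'.2)) hρ₁.le
      linarith
    have := mul_le_mul_of_nonneg_left this hα.le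
    linarith
  generalize hqq : α * (z.1 - z'.1) - ρ * (α * (z.2 - z'.2)) = q at *
  have htp : 0 < t ^ (1 - σ) := Real.rpow_pos_of_pos ht0 _
  have htb2 : t ^ (1 - σ) ≤ 1 + M * (2 * (α * d)) := by
    refine htb.trans ?_
    gcongr
  generalize t ^ (1 - σ) = T at *
  have hA : -(t * (R * z.1) * q) + t * (R * z'.1) * q ≤ 2 * R * (α * d ^ 2) := by
    have : -(t * (R * z.1) * q) + t * (R * z'.1) * q = -(t * R * ((z.1 - z'.1) * q)) := by ring
    rw [this]
    refine (neg_le_abs _).trans ?_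
    rw [abs_mul, abs_mul, abs_mul, abs_of_pos ht0, abs_of_pos hR]
    calc t * R * (|z.1 - z'.1| * |q|) ≤ 1 * R * (d * (2 * (α * d))) := by gcongr
      _ = _ := by ring
  have hBd : (σ - 1)⁻¹ * (T * φ') - (σ - 1)⁻¹ * (T * φ)
      ≤ (σ - 1)⁻¹ * ((1 + M * (2 * (α * d))) * (L * d)) := by
    rw [← mul_sub, ← mul_sub]
    have : φ' - φ ≤ L * d := (le_abs_self _).trans hLz
    calc (σ - 1)⁻¹ * (T * (φ' - φ)) ≤ (σ - 1)⁻¹ * (T * (L * d)) := by gcongr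
      _ ≤ _ := by gcongr
  rw [← hdd]
  have hαd : 0 ≤ α * d ^ 2 := by positivity
  have hdr : B * z.1 * (α * (z.1 - z'.1)) - ρ * z.2 * (α * (z.2 - z'.2))
      - (B * z'.1 * (α * (z.1 - z'.1)) - ρ * z'.2 * (α * (z.2 - z'.2))) ≤ B * (α * d ^ 2) := by
    have e : B * (α * d ^ 2) - (B * z.1 * (α * (z.1 - z'.1)) - ρ * z.2 * (α * (z.2 - z'.2))
      - (B * z'.1 * (α * (z.1 - z'.1)) - ρ * z'.2 * (α * (z.2 - z'.2))))
      = B * α * (z.2 - z'.2) ^ 2 + ρ * α * (z.2 - z'.2) ^ 2 := by rw [hdd]; ring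
    have : 0 ≤ B * α * (z.2 - z'.2) ^ 2 + ρ * α * (z.2 - z'.2) ^ 2 := by positivity
    linarith
  have hm1' : 1 / 2 * β₁ ^ 2 * z.1 ^ 2 * Q 0 0 - 1 / 2 * β₁ ^ 2 * z'.1 ^ 2 * Q' 0 0
      ≤ 3 / 2 * β₁ ^ 2 * (α * d ^ 2) := by
    have h1 : z.1 ^ 2 * Q 0 0 - z'.1 ^ 2 * Q' 0 0 ≤ 3 * α * d ^ 2 := by
      refine hm1.trans ?_
      refine mul_le_mul_of_nonneg_left ?_ (by positivity)
      rw [hdd]; exact le_add_of_nonneg_right (sq_nonneg _)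
    have := mul_le_mul_of_nonneg_left h1 (sq_nonneg β₁)
    linarith
  have hm2' : 1 / 2 * β₂ ^ 2 * z.2 ^ 2 * Q 1 1 - 1 / 2 * β₂ ^ 2 * z'.2 ^ 2 * Q' 1 1
      ≤ 3 / 2 * β₂ ^ 2 * (α * d ^ 2) := by
    have h1 : z.2 ^ 2 * Q 1 1 - z'.2 ^ 2 * Q' 1 1 ≤ 3 * α * d ^ 2 := by
      refine hm2.trans ?_
      refine mul_le_mul_of_nonneg_left ?_ (by positivity)
      rw [hdd]; exact le_add_of_nonneg_left (sq_nonneg _)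
    have := mul_le_mul_of_nonneg_left h1 (sq_nonneg β₂)
    linarith
  have hrest : 0 ≤ (B + 3 / 2 * β₁ ^ 2 + 3 / 2 * β₂ ^ 2 + 2 * R) * d
      + (σ - 1)⁻¹ * L * (α * d ^ 2) + (σ - 1)⁻¹ * L * (2 * M) * d + (α * d ^ 2 + d) := by
    positivity
  linarith

end HabitModel
end
end

section
/- Suppose Assumption 1 holds and that γ·(σ−1) ≤ 1. Then the value function V : (0,∞)² → (−∞,0] is (finite-valued and) continuous on (0,∞)². -/
open MeasureTheory ProbabilityTheory Real Set Matrix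
open scoped ENNReal NNReal

noncomputable section

namespace HabitModel

/-- A standard Brownian motion with respect to the filtration `F`: adapted, with continuous
paths started at `0`, whose increments are independent of the past and Gaussian. -/
structure IsStdBM {Ω : Type*} {mΩ : MeasurableSpace Ω} (P : Measure Ω)
    (F : Filtration ℝ mΩ) (W : ℝ → Ω → ℝ) : Prop where
  adapted : Adapted F W
  cont : ∀ ω, Continuous fun t => W t ω
  init : ∀ ω, W 0 ω = 0
  indep_incr : ∀ s t : ℝ, 0 ≤ s → s ≤ t →
    Indep (MeasurableSpace.comap (fun ω => W t ω - W s ω) inferInstance) (F s) P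
  gauss_incr : ∀ s t : ℝ, 0 ≤ s → s ≤ t →
    P.map (fun ω => W t ω - W s ω) = gaussianReal 0 (Real.toNNReal (t - s))

/-- The stochastic setting of the model: a filtered probability space carrying two
independent standard Brownian motions, together with the model parameters. -/
structure Setting (Ω : Type*) [mΩ : MeasurableSpace Ω] where
  P : Measure Ω
  isProb : IsProbabilityMeasure P
  F : Filtration ℝ mΩ
  W1 : ℝ → Ω → ℝ
  W2 : ℝ → Ω → ℝ
  bm1 : IsStdBM P F W1
  bm2 : IsStdBM P F W2
  indepW : Indep (⨆ t : ℝ, MeasurableSpace.comap (W1 t) inferInstance)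
      (⨆ t : ℝ, MeasurableSpace.comap (W2 t) inferInstance) P
  B : ℝ
  β₁ : ℝ
  β₂ : ℝ
  ρ : ℝ
  θ : ℝ
  σ : ℝ
  γ : ℝ
  R : ℝ
  hB : 0 ≤ B
  hβ₁ : 0 < β₁
  hβ₂ : 0 < β₂
  hρ₀ : 0 < ρ
  hρ₁ : ρ < 1
  hθ : 0 < θ
  hσ : 1 < σ
  hγ₀ : 0 ≤ γ
  hγ₁ : γ < 1
  hR : 0 < R

variable {Ω : Type*} [mΩ : MeasurableSpace Ω]

/-- Pathwise-explicit solution of `dk_t = (B k_t - c_t) dt + β₁ k_t dW¹_t`, `k_0 = k₀`. -/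
def kProc (S : Setting Ω) (k₀ : ℝ) (c : ℝ → Ω → ℝ) (t : ℝ) (ω : Ω) : ℝ :=
  Real.exp ((S.B - S.β₁ ^ 2 / 2) * t + S.β₁ * S.W1 t ω) *
    (k₀ - ∫ s in (0:ℝ)..t, c s ω * Real.exp (-((S.B - S.β₁ ^ 2 / 2) * s) - S.β₁ * S.W1 s ω))

/-- Pathwise-explicit solution of `dh_t = ρ (c_t - h_t) dt + β₂ h_t dW²_t`, `h_0 = h₀`. -/
def hProc (S : Setting Ω) (h₀ : ℝ) (c : ℝ → Ω → ℝ) (t : ℝ) (ω : Ω) : ℝ :=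
  Real.exp ((-S.ρ - S.β₂ ^ 2 / 2) * t + S.β₂ * S.W2 t ω) *
    (h₀ + S.ρ * ∫ s in (0:ℝ)..t, c s ω * Real.exp ((S.ρ + S.β₂ ^ 2 / 2) * s - S.β₂ * S.W2 s ω))

/-- Admissibility of a control `c` for the initial condition `(k₀, h₀)`: progressively
measurable, a.s. locally integrable trajectories, `c > 0` ℙ⊗dt-a.e., positive state
processes, and `c ≤ R·k` ℙ⊗dt-a.e. -/
structure IsAdmissible (S : Setting Ω) (k₀ h₀ : ℝ) (c : ℝ → Ω → ℝ) : Prop where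
  prog : ProgMeasurable S.F c
  locInt : ∀ᵐ ω ∂S.P, ∀ t : ℝ, 0 ≤ t → IntervalIntegrable (fun s => c s ω) volume 0 t
  cpos : ∀ᵐ ω ∂S.P, ∀ᵐ t ∂(volume.restrict (Set.Ici (0:ℝ))), 0 < c t ω
  kpos : ∀ᵐ ω ∂S.P, ∀ t : ℝ, 0 ≤ t → 0 < kProc S k₀ c t ω
  hpos : ∀ᵐ ω ∂S.P, ∀ t : ℝ, 0 ≤ t → 0 < hProc S h₀ c t ω
  cbdd : ∀ᵐ ω ∂S.P, ∀ᵐ t ∂(volume.restrict (Set.Ici (0:ℝ))), c t ω ≤ S.R * kProc S k₀ c t ω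

/-- The (nonnegative) cost `-J(k₀,h₀;c) ∈ [0,∞]`; note that
`(1/(1-σ))·(c/h^γ)^(1-σ) = -(1/(σ-1))·(h^γ/c)^(σ-1)`. -/
def Jcost (S : Setting Ω) (k₀ h₀ : ℝ) (c : ℝ → Ω → ℝ) : ℝ≥0∞ :=
  ∫⁻ ω, (∫⁻ t in Set.Ioi (0:ℝ),
    ENNReal.ofReal ((S.σ - 1)⁻¹ * ((hProc S h₀ c t ω) ^ S.γ / c t ω) ^ (S.σ - 1) *
      Real.exp (-S.θ * t))) ∂S.P

/-- The utility functional `J(k₀,h₀;c) ∈ [-∞,0]`. -/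
def J (S : Setting Ω) (k₀ h₀ : ℝ) (c : ℝ → Ω → ℝ) : EReal := -(Jcost S k₀ h₀ c : EReal)

/-- The infimum of the costs `-J(k₀,h₀;c)` over admissible controls. -/
def Vcost (S : Setting Ω) (k₀ h₀ : ℝ) : ℝ≥0∞ :=
  ⨅ c : {c : ℝ → Ω → ℝ // IsAdmissible S k₀ h₀ c}, Jcost S k₀ h₀ c.1

/-- The value function `V(k₀,h₀) = sup_{c ∈ 𝓐(k₀,h₀)} J(k₀,h₀;c) ∈ [-∞,0]`
(the supremum of `J = -Jcost` equals minus the infimum of the costs). -/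
def V (S : Setting Ω) (k₀ h₀ : ℝ) : EReal := -(Vcost S k₀ h₀ : EReal)

/-- Assumption 1 on the model parameters (with `λ = max{2, 1/(γ(σ-1))}`; it forces `γ > 0`). -/
def Assumption1 (S : Setting Ω) : Prop :=
  S.B ≤ S.R ∧ 0 < S.γ ∧
    (S.ρ + (S.β₂ ^ 2 - S.β₁ ^ 2) / 2 ≤ 0 →
      (S.σ - 1) * (-S.γ * S.ρ - (S.γ * S.β₂ ^ 2 - S.β₁ ^ 2) / 2 +
        max 2 (1 / (S.γ * (S.σ - 1))) * (S.σ - 1) * (S.β₁ ^ 2 + S.γ ^ 2 * S.β₂ ^ 2)) < S.θ) ∧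
    (0 < S.ρ + (S.β₂ ^ 2 - S.β₁ ^ 2) / 2 →
      (S.σ - 1) * (S.β₁ ^ 2 * (1 - S.γ) / 2 +
        max 2 (1 / (S.γ * (S.σ - 1))) * (S.σ - 1) * (S.β₁ ^ 2 + S.γ ^ 2 * S.β₂ ^ 2)) < S.θ)

lemma scale_adm (S : Setting Ω) {k h k' h' l : ℝ} (hl : 1 ≤ l) (hh' : 0 < h')
    (hk : k / l ≤ k') {c : ℝ → Ω → ℝ} (hc : IsAdmissible S k h c) :
    IsAdmissible S k' h' (fun t ω => l⁻¹ * c t ω) := by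
  have hl0 : 0 < l := by linarith
  have hkk : ∀ t ω, l⁻¹ * kProc S k c t ω ≤ kProc S k' (fun t ω => l⁻¹ * c t ω) t ω := by
    intro t ω
    unfold kProc
    simp only [mul_assoc l⁻¹, intervalIntegral.integral_const_mul]
    rw [mul_left_comm]
    refine mul_le_mul_of_nonneg_left ?_ (Real.exp_pos _).le
    rw [mul_sub]
    have : l⁻¹ * k = k / l := by ring
    linarith
  refine ⟨?_, ?_, ?_, ?_, ?_, ?_⟩
  · intro t
    exact (hc.prog t).const_mul l⁻¹
  · filter_upwards [hc.locInt] with ω hω t ht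
    exact (hω t ht).const_mul _
  · filter_upwards [hc.cpos] with ω hω
    filter_upwards [hω] with t ht
    positivity
  · filter_upwards [hc.kpos] with ω hω t ht
    exact lt_of_lt_of_le (mul_pos (inv_pos.2 hl0) (hω t ht)) (hkk t ω)
  · filter_upwards [hc.cpos] with ω hω t ht
    unfold hProc
    refine mul_pos (Real.exp_pos _) (add_pos_of_pos_of_nonneg hh' (mul_nonneg S.hρ₀.le ?_))
    refine intervalIntegral.integral_nonneg_of_ae_restrict ht ?_
    have := ae_restrict_of_ae_restrict_of_subset (fun x (hx : x ∈ Icc (0:ℝ) t) => hx.1) hω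
    filter_upwards [this] with s hs
    simp only [Pi.zero_apply]
    positivity
  · filter_upwards [hc.cbdd] with ω hω
    filter_upwards [hω] with t ht
    calc l⁻¹ * c t ω ≤ l⁻¹ * (S.R * kProc S k c t ω) :=
          mul_le_mul_of_nonneg_left ht (inv_pos.2 hl0).le
      _ = S.R * (l⁻¹ * kProc S k c t ω) := by ring
      _ ≤ _ := mul_le_mul_of_nonneg_left (hkk t ω) S.hR.le

lemma scale_cost (S : Setting Ω) {k h h' k' l : ℝ} (hl : 1 ≤ l) (hh' : 0 < h')
    (hh : h' ≤ l * h) (hk : k / l ≤ k') {c : ℝ → Ω → ℝ} (hc : IsAdmissible S k h c) :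
    Jcost S k' h' (fun t ω => l⁻¹ * c t ω) ≤
      ENNReal.ofReal ((l ^ S.γ * l) ^ (S.σ - 1)) * Jcost S k h c := by
  have hl0 : 0 < l := by linarith
  have hc' := scale_adm S hl hh' hk hc
  unfold Jcost
  rw [← lintegral_const_mul' _ _ ENNReal.ofReal_ne_top]
  refine lintegral_mono_ae ?_
  filter_upwards [hc.cpos, hc.hpos, hc'.hpos] with ω hω hhp hhp'
  rw [← lintegral_const_mul' _ _ ENNReal.ofReal_ne_top]
  refine lintegral_mono_ae ?_
  have h1 := ae_restrict_of_ae_restrict_of_subset (Ioi_subset_Ici_self (a := (0:ℝ))) hω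
  filter_upwards [h1, ae_restrict_mem measurableSet_Ioi] with t ht ht0
  have ht0' : 0 ≤ t := le_of_lt ht0
  have hI : 0 ≤ ∫ s in (0:ℝ)..t, c s ω * Real.exp ((S.ρ + S.β₂ ^ 2 / 2) * s - S.β₂ * S.W2 s ω) := by
    refine intervalIntegral.integral_nonneg_of_ae_restrict ht0' ?_
    have := ae_restrict_of_ae_restrict_of_subset (fun x (hx : x ∈ Icc (0:ℝ) t) => hx.1) hω
    filter_upwards [this] with s hs
    simp only [Pi.zero_apply]
    positivity
  have hhle : hProc S h' (fun t ω => l⁻¹ * c t ω) t ω ≤ l * hProc S h c t ω := by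
    unfold hProc
    simp only [mul_assoc l⁻¹, intervalIntegral.integral_const_mul]
    rw [mul_left_comm l, mul_left_comm S.ρ]
    refine mul_le_mul_of_nonneg_left ?_ (Real.exp_pos _).le
    have h3 : l⁻¹ ≤ l := (inv_le_one_of_one_le₀ hl).trans hl
    have h4 := mul_le_mul_of_nonneg_right h3 (mul_nonneg S.hρ₀.le hI)
    rw [mul_add]
    nlinarith
  rw [← ENNReal.ofReal_mul (by positivity)]
  refine ENNReal.ofReal_le_ofReal ?_
  have hq : 0 < S.σ - 1 := by linarith [S.hσ]
  have hp := hhp t ht0'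
  have hp' := hhp' t ht0'
  have e1 : (hProc S h' (fun t ω => l⁻¹ * c t ω) t ω) ^ S.γ ≤ l ^ S.γ * (hProc S h c t ω) ^ S.γ := by
    rw [← Real.mul_rpow hl0.le hp.le]
    exact Real.rpow_le_rpow hp'.le hhle S.hγ₀
  have e2 : (hProc S h' (fun t ω => l⁻¹ * c t ω) t ω) ^ S.γ / (l⁻¹ * c t ω) ≤
      (l ^ S.γ * l) * ((hProc S h c t ω) ^ S.γ / c t ω) := by
    rw [div_le_iff₀ (by positivity)]
    calc _ ≤ _ := e1
      _ = _ := by field_simp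
  have e3 : ((hProc S h' (fun t ω => l⁻¹ * c t ω) t ω) ^ S.γ / (l⁻¹ * c t ω)) ^ (S.σ - 1) ≤
      (l ^ S.γ * l) ^ (S.σ - 1) * ((hProc S h c t ω) ^ S.γ / c t ω) ^ (S.σ - 1) := by
    rw [← Real.mul_rpow (by positivity) (by positivity)]
    exact Real.rpow_le_rpow (by positivity) e2 hq.le
  have h5 : 0 < (S.σ - 1)⁻¹ := inv_pos.2 hq
  calc _ ≤ (S.σ - 1)⁻¹ * ((l ^ S.γ * l) ^ (S.σ - 1) * ((hProc S h c t ω) ^ S.γ / c t ω) ^ (S.σ - 1)) *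
      Real.exp (-S.θ * t) := by gcongr
    _ = _ := by ring

lemma scale_V (S : Setting Ω) {k h h' k' l : ℝ} (hl : 1 ≤ l) (hh' : 0 < h')
    (hh : h' ≤ l * h) (hk : k / l ≤ k') :
    Vcost S k' h' ≤ ENNReal.ofReal ((l ^ S.γ * l) ^ (S.σ - 1)) * Vcost S k h := by
  have hl0 : 0 < l := by linarith
  have hpos : 0 < (l ^ S.γ * l) ^ (S.σ - 1) := by positivity
  have hne : ENNReal.ofReal ((l ^ S.γ * l) ^ (S.σ - 1)) ≠ 0 := (ENNReal.ofReal_pos.2 hpos).ne'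
  unfold Vcost
  rw [ENNReal.mul_iInf_of_ne hne ENNReal.ofReal_ne_top]
  refine le_iInf fun c => ?_
  have h1 := scale_adm S hl hh' hk c.2
  have h2 := scale_cost S hl hh' hh hk c.2
  refine le_trans ?_ h2
  exact iInf_le (fun c : {c : ℝ → Ω → ℝ // IsAdmissible S k' h' c} => Jcost S k' h' c.1) ⟨_, h1⟩

lemma V_cont_of_finite (S : Setting Ω) (hf : ∀ k h : ℝ, 0 < k → 0 < h → Vcost S k h ≠ ⊤) :
    ContinuousOn (fun z : ℝ × ℝ => (V S z.1 z.2).toReal) (Set.Ioi (0:ℝ) ×ˢ Set.Ioi (0:ℝ)) := by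
  have e : (fun z : ℝ × ℝ => (V S z.1 z.2).toReal) = fun z => -(Vcost S z.1 z.2).toReal := by
    funext z
    simp [V]
  rw [e]
  refine ContinuousOn.neg ?_
  rintro ⟨k, h⟩ ⟨hk, hh⟩
  simp only [Set.mem_Ioi] at hk hh
  refine ContinuousAt.continuousWithinAt ?_
  -- real version of scaling
  have sc : ∀ k h k' h' l : ℝ, 0 < k → 0 < h → 0 < k' → 0 < h' → 1 ≤ l → h' ≤ l * h → k / l ≤ k' →
      (Vcost S k' h').toReal ≤ (l ^ S.γ * l) ^ (S.σ - 1) * (Vcost S k h).toReal := by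
    intro k h k' h' l hk hh hk' hh' hl h1 h2
    have := ENNReal.toReal_mono (ENNReal.mul_ne_top ENNReal.ofReal_ne_top (hf k h hk hh))
      (scale_V S hl hh' h1 h2)
    rwa [ENNReal.toReal_mul, ENNReal.toReal_ofReal (by positivity)] at this
  let L : ℝ × ℝ → ℝ := fun z => max (max (z.1 / k) (k / z.1)) (max (z.2 / h) (h / z.2))
  have hL : ContinuousAt L (k, h) := by
    have a1 : ContinuousAt (fun z : ℝ × ℝ => z.1) (k, h) := continuousAt_fst
    have a2 : ContinuousAt (fun z : ℝ × ℝ => z.2) (k, h) := continuousAt_snd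
    exact ((a1.div_const k).max (continuousAt_const.div a1 hk.ne')).max
      ((a2.div_const h).max (continuousAt_const.div a2 hh.ne'))
  have hL1 : L (k, h) = 1 := by simp [L, hk.ne', hh.ne']
  let M : ℝ × ℝ → ℝ := fun z => (L z ^ S.γ * L z) ^ (S.σ - 1)
  have hM : ContinuousAt M (k, h) := by
    refine ContinuousAt.rpow_const ((hL.rpow_const (Or.inl ?_)).mul hL) (Or.inl ?_) <;> simp [hL1]
  have hM1 : M (k, h) = 1 := by simp [M, hL1]
  have hpos : ∀ᶠ z : ℝ × ℝ in nhds (k, h), 0 < z.1 ∧ 0 < z.2 := by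
    refine Filter.Eventually.and ?_ ?_
    · exact continuousAt_fst.eventually (lt_mem_nhds hk)
    · exact continuousAt_snd.eventually (lt_mem_nhds hh)
  have hMt : Filter.Tendsto M (nhds (k, h)) (nhds 1) := by rw [← hM1]; exact hM
  have hb : ∀ z : ℝ × ℝ, 0 < z.1 ∧ 0 < z.2 → 1 ≤ L z ∧ z.1 ≤ L z * k ∧ k / L z ≤ z.1 ∧
      z.2 ≤ L z * h ∧ h ≤ L z * z.2 ∧ z.1 / L z ≤ k := by
    rintro z ⟨h1, h2⟩
    have b1 : z.1 / k ≤ L z := (le_max_left _ _).trans (le_max_left _ _)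
    have b2 : k / z.1 ≤ L z := (le_max_right _ _).trans (le_max_left _ _)
    have b3 : z.2 / h ≤ L z := (le_max_left _ _).trans (le_max_right _ _)
    have b4 : h / z.2 ≤ L z := (le_max_right _ _).trans (le_max_right _ _)
    have hL0 : 0 < L z := lt_of_lt_of_le (by positivity) b1
    have hL1 : 1 ≤ L z := by
      rcases le_total z.1 k with hz | hz
      · exact ((one_le_div h1).2 hz).trans b2
      · exact ((one_le_div hk).2 hz).trans b1
    rw [div_le_iff₀ (by assumption)] at b1 b2 b3 b4
    refine ⟨hL1, b1, ?_, b3, b4, ?_⟩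
    · rw [div_le_iff₀ hL0]; linarith
    · rw [div_le_iff₀ hL0]; linarith
  have up : Filter.Tendsto (fun z => M z * (Vcost S k h).toReal) (nhds (k, h))
      (nhds (Vcost S k h).toReal) := by
    simpa using hMt.mul_const (Vcost S k h).toReal
  have lo : Filter.Tendsto (fun z => (M z)⁻¹ * (Vcost S k h).toReal) (nhds (k, h))
      (nhds (Vcost S k h).toReal) := by
    simpa using (hMt.inv₀ one_ne_zero).mul_const (Vcost S k h).toReal
  refine tendsto_of_tendsto_of_tendsto_of_le_of_le' lo up ?_ ?_
  · filter_upwards [hpos] with z hz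
    obtain ⟨l1, _, _, _, l5, l6⟩ := hb z hz
    have hL0 : 0 < L z := by linarith
    have hM0 : 0 < M z := by simp only [M]; positivity
    rw [inv_mul_le_iff₀ hM0]
    exact sc _ _ _ _ _ hz.1 hz.2 hk hh l1 l5 l6
  · filter_upwards [hpos] with z hz
    obtain ⟨l1, _, l3, l4, _, _⟩ := hb z hz
    exact sc _ _ _ _ _ hk hh hz.1 hz.2 l1 l4 l3

lemma gauss_lint {Ω' : Type*} {m : MeasurableSpace Ω'} (P : Measure Ω') [IsProbabilityMeasure P]
    (X : Ω' → ℝ) (v : ℝ≥0) (hX : P.map X = gaussianReal 0 v) (y : ℝ) :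
    ∫⁻ ω, ENNReal.ofReal (Real.exp (y * X ω)) ∂P = ENNReal.ofReal (Real.exp (v * y ^ 2 / 2)) := by
  have hXm : AEMeasurable X P := aemeasurable_of_map_neZero (by rw [hX]; infer_instance)
  have hint : Integrable (fun ω => Real.exp (y * X ω)) P := by
    have := integrable_exp_mul_gaussianReal (μ := 0) (v := v) y
    rw [← hX] at this
    exact this.comp_aemeasurable hXm
  rw [← ofReal_integral_eq_lintegral_ofReal hint (Filter.Eventually.of_forall fun _ => (Real.exp_pos _).le)]
  have := mgf_gaussianReal hX y
  rw [mgf] at this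
  rw [this]; simp

lemma W_gauss {P : Measure Ω} {F : Filtration ℝ mΩ} {W : ℝ → Ω → ℝ} (hW : IsStdBM P F W)
    [IsProbabilityMeasure P] {s t : ℝ} (hs : 0 ≤ s) (hst : s ≤ t) (y : ℝ) :
    ∫⁻ ω, ENNReal.ofReal (Real.exp (y * (W t ω - W s ω))) ∂P =
      ENNReal.ofReal (Real.exp ((t - s) * y ^ 2 / 2)) := by
  rw [gauss_lint P _ _ (hW.gauss_incr s t hs hst), Real.coe_toNNReal _ (by linarith)]

lemma joint_gauss (S : Setting Ω) {s t : ℝ} (hs : 0 ≤ s) (hst : s ≤ t) (x y z : ℝ) :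
    ∫⁻ ω, ENNReal.ofReal (Real.exp (x * S.W1 s ω + y * (S.W1 t ω - S.W1 s ω) +
      z * (S.W2 t ω - S.W2 s ω))) ∂S.P =
      ENNReal.ofReal (Real.exp ((s * x ^ 2 + (t - s) * y ^ 2 + (t - s) * z ^ 2) / 2)) := by
  have := S.isProb
  have m1 : ∀ u, Measurable (S.W1 u) := fun u => S.bm1.adapted.measurable
  have m2 : ∀ u, Measurable (S.W2 u) := fun u => S.bm2.adapted.measurable
  have c1 : ∀ u, Measurable[⨆ t : ℝ, MeasurableSpace.comap (S.W1 t) inferInstance] (S.W1 u) :=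
    fun u => Measurable.of_comap_le (le_iSup (fun t => MeasurableSpace.comap (S.W1 t) inferInstance) u)
  have c2 : ∀ u, Measurable[⨆ t : ℝ, MeasurableSpace.comap (S.W2 t) inferInstance] (S.W2 u) :=
    fun u => Measurable.of_comap_le (le_iSup (fun t => MeasurableSpace.comap (S.W2 t) inferInstance) u)
  have e1 : ∫⁻ ω, ENNReal.ofReal (Real.exp (x * S.W1 s ω + y * (S.W1 t ω - S.W1 s ω) +
      z * (S.W2 t ω - S.W2 s ω))) ∂S.P =
      (∫⁻ ω, ENNReal.ofReal (Real.exp (x * S.W1 s ω + y * (S.W1 t ω - S.W1 s ω))) ∂S.P) *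
      ∫⁻ ω, ENNReal.ofReal (Real.exp (z * (S.W2 t ω - S.W2 s ω))) ∂S.P := by
    rw [← lintegral_mul_eq_lintegral_mul_lintegral_of_independent_measurableSpace
      (iSup_le fun u => (m1 u).comap_le) (iSup_le fun u => (m2 u).comap_le) S.indepW ?_ ?_]
    · refine lintegral_congr fun ω => ?_
      rw [← ENNReal.ofReal_mul (Real.exp_pos _).le, ← Real.exp_add]
    · exact ENNReal.measurable_ofReal.comp (Real.measurable_exp.comp
        (((c1 s).const_mul x).add (((c1 t).sub (c1 s)).const_mul y)))
    · exact ENNReal.measurable_ofReal.comp (Real.measurable_exp.comp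
        (((c2 t).sub (c2 s)).const_mul z))
  have e2 : ∫⁻ ω, ENNReal.ofReal (Real.exp (x * S.W1 s ω + y * (S.W1 t ω - S.W1 s ω))) ∂S.P =
      (∫⁻ ω, ENNReal.ofReal (Real.exp (y * (S.W1 t ω - S.W1 s ω))) ∂S.P) *
      ∫⁻ ω, ENNReal.ofReal (Real.exp (x * S.W1 s ω)) ∂S.P := by
    rw [← lintegral_mul_eq_lintegral_mul_lintegral_of_independent_measurableSpace
      ((m1 t).sub (m1 s)).comap_le (S.F.le s) (S.bm1.indep_incr s t hs hst) ?_ ?_]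
    · refine lintegral_congr fun ω => ?_
      rw [← ENNReal.ofReal_mul (Real.exp_pos _).le, ← Real.exp_add, add_comm]
    · have : Measurable (fun u : ℝ => ENNReal.ofReal (Real.exp (y * u))) := by fun_prop
      exact this.comp (comap_measurable (fun ω => S.W1 t ω - S.W1 s ω))
    · have : Measurable (fun u : ℝ => ENNReal.ofReal (Real.exp (x * u))) := by fun_prop
      exact this.comp (S.bm1.adapted s)
  have e3 : ∫⁻ ω, ENNReal.ofReal (Real.exp (x * S.W1 s ω)) ∂S.P =
      ENNReal.ofReal (Real.exp (s * x ^ 2 / 2)) := by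
    have := W_gauss S.bm1 (le_refl (0:ℝ)) hs x
    simpa [S.bm1.init] using this
  rw [e1, e2, e3, W_gauss S.bm1 hs hst, W_gauss S.bm2 hs hst,
    ← ENNReal.ofReal_mul (Real.exp_pos _).le, ← ENNReal.ofReal_mul (by positivity),
    ← Real.exp_add, ← Real.exp_add]
  congr 2
  ring

/-- Feedback control `c = r k` in open-loop form. -/
def cR (S : Setting Ω) (k r : ℝ) (t : ℝ) (ω : Ω) : ℝ :=
  r * k * Real.exp ((S.B - r - S.β₁ ^ 2 / 2) * t + S.β₁ * S.W1 t ω)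

lemma cR_cont (S : Setting Ω) (k r : ℝ) (ω : Ω) : Continuous fun t => cR S k r t ω := by
  have := S.bm1.cont ω
  unfold cR
  fun_prop

lemma kProc_cR (S : Setting Ω) (k r : ℝ) (hr : 0 < r) (t : ℝ) (ω : Ω) :
    r * kProc S k (cR S k r) t ω = cR S k r t ω := by
  have hI : ∫ s in (0:ℝ)..t, cR S k r s ω *
      Real.exp (-((S.B - S.β₁ ^ 2 / 2) * s) - S.β₁ * S.W1 s ω) = k * (1 - Real.exp (-r * t)) := by
    have h1 : ∀ s, cR S k r s ω * Real.exp (-((S.B - S.β₁ ^ 2 / 2) * s) - S.β₁ * S.W1 s ω) =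
        r * k * Real.exp (-r * s) := by
      intro s
      unfold cR
      rw [mul_assoc, ← Real.exp_add]
      congr 2
      ring
    simp_rw [h1]
    rw [intervalIntegral.integral_const_mul, show ∫ s in (0:ℝ)..t, Real.exp (-r * s) = (1 - Real.exp (-r * t)) / r from ?_]
    · field_simp
    · rw [intervalIntegral.integral_comp_mul_left (fun x => Real.exp x) (neg_ne_zero.2 hr.ne'),
        integral_exp]
      simp
      field_simp
      ring
  unfold kProc
  rw [hI]
  unfold cR
  have : Real.exp ((S.B - r - S.β₁ ^ 2 / 2) * t + S.β₁ * S.W1 t ω) =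
      Real.exp ((S.B - S.β₁ ^ 2 / 2) * t + S.β₁ * S.W1 t ω) * Real.exp (-r * t) := by
    rw [← Real.exp_add]; congr 1; ring
  rw [this]
  ring

lemma cR_adm (S : Setting Ω) {k h r : ℝ} (hk : 0 < k) (hh : 0 < h) (hr : 0 < r) (hrR : r ≤ S.R) :
    IsAdmissible S k h (cR S k r) := by
  have hpos : ∀ t ω, 0 < cR S k r t ω := fun t ω => by unfold cR; positivity
  have hkp : ∀ t ω, 0 < kProc S k (cR S k r) t ω := fun t ω => by
    have := hpos t ω
    rw [← kProc_cR S k r hr] at this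
    exact pos_of_mul_pos_right this hr.le
  refine ⟨?_, ?_, ?_, ?_, ?_, ?_⟩
  · refine StronglyAdapted.isStronglyProgressive_of_continuous ?_ (cR_cont S k r)
    intro t
    refine Measurable.stronglyMeasurable ?_
    have : Measurable (fun u : ℝ => r * k * Real.exp ((S.B - r - S.β₁ ^ 2 / 2) * t + S.β₁ * u)) := by
      fun_prop
    exact this.comp (S.bm1.adapted t)
  · exact Filter.Eventually.of_forall fun ω t _ => (cR_cont S k r ω).intervalIntegrable _ _
  · exact Filter.Eventually.of_forall fun ω => Filter.Eventually.of_forall fun t => hpos t ω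
  · exact Filter.Eventually.of_forall fun ω t _ => hkp t ω
  · refine Filter.Eventually.of_forall fun ω t ht => ?_
    unfold hProc
    refine mul_pos (Real.exp_pos _) (add_pos_of_pos_of_nonneg hh (mul_nonneg S.hρ₀.le ?_))
    exact intervalIntegral.integral_nonneg ht fun s _ => (mul_pos (hpos s ω) (Real.exp_pos _)).le
  · refine Filter.Eventually.of_forall fun ω => Filter.Eventually.of_forall fun t => ?_
    rw [← kProc_cR S k r hr]
    exact mul_le_mul_of_nonneg_right hrR (hkp t ω).le

/-- The normalized `c^(1-σ)`. -/
def Psi (S : Setting Ω) (r t : ℝ) (ω : Ω) : ℝ :=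
  Real.exp (-((S.σ - 1) * ((S.B - r - S.β₁ ^ 2 / 2) * t + S.β₁ * S.W1 t ω)))

/-- The normalized kernel. -/
def Phi (S : Setting Ω) (r s t : ℝ) (ω : Ω) : ℝ :=
  Real.exp ((S.B - r - S.β₁ ^ 2 / 2) * s + S.β₁ * S.W1 s ω
    - (S.σ - 1) * ((S.B - r - S.β₁ ^ 2 / 2) * t + S.β₁ * S.W1 t ω)
    + ((-S.ρ - S.β₂ ^ 2 / 2) * (t - s) + S.β₂ * (S.W2 t ω - S.W2 s ω)))

/-- The growth rate. -/
def rate (S : Setting Ω) (r : ℝ) : ℝ :=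
  (S.σ - 1) * (r - S.B) + S.β₁ ^ 2 * ((S.σ - 1) + (S.σ - 1) ^ 2) / 2

lemma Psi_bd (S : Setting Ω) {r t : ℝ} (ht : 0 ≤ t) :
    ∫⁻ ω, ENNReal.ofReal (Psi S r t ω) ∂S.P ≤ ENNReal.ofReal (Real.exp (rate S r * t)) := by
  have e : ∀ ω, ENNReal.ofReal (Psi S r t ω) =
      ENNReal.ofReal (Real.exp (-((S.σ - 1) * ((S.B - r - S.β₁ ^ 2 / 2) * t)))) *
      ENNReal.ofReal (Real.exp ((-((S.σ - 1) * S.β₁)) * S.W1 t ω + 0 * (S.W1 t ω - S.W1 t ω) +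
      0 * (S.W2 t ω - S.W2 t ω))) := by
    intro ω
    rw [← ENNReal.ofReal_mul (Real.exp_pos _).le, ← Real.exp_add, Psi]
    congr 2; ring
  simp_rw [e]
  rw [lintegral_const_mul' _ _ ENNReal.ofReal_ne_top, joint_gauss S ht le_rfl,
    ← ENNReal.ofReal_mul (Real.exp_pos _).le, ← Real.exp_add]
  apply le_of_eq
  congr 2
  unfold rate
  ring

lemma Phi_bd (S : Setting Ω) {r s t : ℝ} (hr : S.B ≤ r) (hs : 0 ≤ s) (hst : s ≤ t) :
    ∫⁻ ω, ENNReal.ofReal (Phi S r s t ω) ∂S.P ≤ ENNReal.ofReal (Real.exp (rate S r * t)) := by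
  have e : ∀ ω, ENNReal.ofReal (Phi S r s t ω) =
      ENNReal.ofReal (Real.exp ((S.B - r - S.β₁ ^ 2 / 2) * (s - (S.σ - 1) * t) +
        (-S.ρ - S.β₂ ^ 2 / 2) * (t - s))) *
      ENNReal.ofReal (Real.exp (((1 - (S.σ - 1)) * S.β₁) * S.W1 s ω +
        (-((S.σ - 1) * S.β₁)) * (S.W1 t ω - S.W1 s ω) +
        S.β₂ * (S.W2 t ω - S.W2 s ω))) := by
    intro ω
    rw [← ENNReal.ofReal_mul (Real.exp_pos _).le, ← Real.exp_add, Phi]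
    congr 2; ring
  simp_rw [e]
  rw [lintegral_const_mul' _ _ ENNReal.ofReal_ne_top, joint_gauss S hs hst,
    ← ENNReal.ofReal_mul (Real.exp_pos _).le, ← Real.exp_add]
  refine ENNReal.ofReal_le_ofReal (Real.exp_le_exp.2 ?_)
  unfold rate
  have hq : 0 < S.σ - 1 := by linarith [S.hσ]
  have a1 : 0 ≤ (r - S.B) * s := mul_nonneg (by linarith) hs
  have a2 : 0 ≤ S.β₁ ^ 2 * (S.σ - 1) * s := by positivity
  have a3 : 0 ≤ S.ρ * (t - s) := mul_nonneg S.hρ₀.le (by linarith)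
  nlinarith

lemma W1_meas2 (S : Setting Ω) : Measurable fun p : ℝ × Ω => S.W1 p.1 p.2 :=
  measurable_uncurry_of_continuous_of_measurable S.bm1.cont fun _ => S.bm1.adapted.measurable

lemma W2_meas2 (S : Setting Ω) : Measurable fun p : ℝ × Ω => S.W2 p.1 p.2 :=
  measurable_uncurry_of_continuous_of_measurable S.bm2.cont fun _ => S.bm2.adapted.measurable

lemma Psi_meas (S : Setting Ω) (r : ℝ) {α : Type*} [MeasurableSpace α] {t : α → ℝ} {w : α → Ω}
    (ht : Measurable t) (hw : Measurable w) : Measurable fun p => Psi S r (t p) (w p) := by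
  have h1 : Measurable fun p => S.W1 (t p) (w p) := (W1_meas2 S).comp (ht.prodMk hw)
  unfold Psi
  fun_prop

lemma Phi_meas (S : Setting Ω) (r : ℝ) {α : Type*} [MeasurableSpace α] {s t : α → ℝ} {w : α → Ω}
    (hs : Measurable s) (ht : Measurable t) (hw : Measurable w) :
    Measurable fun p => Phi S r (s p) (t p) (w p) := by
  have h1 : Measurable fun p => S.W1 (t p) (w p) := (W1_meas2 S).comp (ht.prodMk hw)
  have h2 : Measurable fun p => S.W1 (s p) (w p) := (W1_meas2 S).comp (hs.prodMk hw)
  have h3 : Measurable fun p => S.W2 (t p) (w p) := (W2_meas2 S).comp (ht.prodMk hw)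
  have h4 : Measurable fun p => S.W2 (s p) (w p) := (W2_meas2 S).comp (hs.prodMk hw)
  unfold Phi
  fun_prop

lemma I_meas (S : Setting Ω) (r : ℝ) {α : Type*} [MeasurableSpace α] {t : α → ℝ} {w : α → Ω}
    (ht : Measurable t) (hw : Measurable w) : Measurable fun p =>
      ∫⁻ u in Set.Ioc (0:ℝ) 1, ENNReal.ofReal (Phi S r (u * t p) (t p) (w p)) := by
  refine Measurable.lintegral_prod_right
    (f := fun (p : α) u => ENNReal.ofReal (Phi S r (u * t p) (t p) (w p))) ?_
  refine Measurable.ennreal_ofReal ?_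
  exact Phi_meas S r (s := fun q : α × ℝ => q.2 * t q.1) (t := fun q => t q.1)
    (w := fun q => w q.1) (measurable_snd.mul (ht.comp measurable_fst)) (ht.comp measurable_fst)
    (hw.comp measurable_fst)

lemma hProc_Psi (S : Setting Ω) (k h r t : ℝ) (ω : Ω) :
    hProc S h (cR S k r) t ω * Psi S r t ω =
      h * Phi S r 0 t ω + S.ρ * (r * k) * t * ∫ u in (0:ℝ)..1, Phi S r (u * t) t ω := by
  have h1 : t * ∫ u in (0:ℝ)..1, Phi S r (u * t) t ω = ∫ s in (0:ℝ)..t, Phi S r s t ω := by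
    rw [intervalIntegral.mul_integral_comp_mul_right (f := fun s => Phi S r s t ω)]
    simp
  have h2 : ∀ s, Real.exp ((-S.ρ - S.β₂ ^ 2 / 2) * t + S.β₂ * S.W2 t ω) * (cR S k r s ω *
      Real.exp ((S.ρ + S.β₂ ^ 2 / 2) * s - S.β₂ * S.W2 s ω)) * Psi S r t ω =
      (r * k) * Phi S r s t ω := by
    intro s
    have e : Phi S r s t ω = Real.exp ((-S.ρ - S.β₂ ^ 2 / 2) * t + S.β₂ * S.W2 t ω) *
      (Real.exp ((S.B - r - S.β₁ ^ 2 / 2) * s + S.β₁ * S.W1 s ω) *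
      Real.exp ((S.ρ + S.β₂ ^ 2 / 2) * s - S.β₂ * S.W2 s ω)) * Psi S r t ω := by
      unfold Phi Psi
      rw [← Real.exp_add, ← Real.exp_add, ← Real.exp_add]
      congr 1; ring
    rw [e, cR]
    ring
  have h3 : Phi S r 0 t ω = Real.exp ((-S.ρ - S.β₂ ^ 2 / 2) * t + S.β₂ * S.W2 t ω) * Psi S r t ω := by
    unfold Phi Psi
    rw [← Real.exp_add, S.bm1.init, S.bm2.init]
    congr 1; ring
  rw [mul_assoc _ t, h1, h3]
  have h4 : (r * k) * ∫ s in (0:ℝ)..t, Phi S r s t ω =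
      Real.exp ((-S.ρ - S.β₂ ^ 2 / 2) * t + S.β₂ * S.W2 t ω) * (∫ s in (0:ℝ)..t, cR S k r s ω *
      Real.exp ((S.ρ + S.β₂ ^ 2 / 2) * s - S.β₂ * S.W2 s ω)) * Psi S r t ω := by
    rw [← intervalIntegral.integral_const_mul, ← intervalIntegral.integral_const_mul,
      ← intervalIntegral.integral_mul_const]
    simp_rw [h2]
  rw [mul_assoc S.ρ, h4]
  unfold hProc
  ring

lemma integrand_bd (S : Setting Ω) (hγσ : S.γ * (S.σ - 1) ≤ 1) {k h r t : ℝ} (hk : 0 < k)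
    (hh : 0 < h) (hr : 0 < r) (ht : 0 ≤ t) (ω : Ω) :
    (S.σ - 1)⁻¹ * ((hProc S h (cR S k r) t ω) ^ S.γ / cR S k r t ω) ^ (S.σ - 1) *
      Real.exp (-S.θ * t) ≤ (S.σ - 1)⁻¹ * (r * k) ^ (-(S.σ - 1)) * Real.exp (-S.θ * t) *
      (Psi S r t ω + (h * Phi S r 0 t ω +
        S.ρ * (r * k) * t * ∫ u in (0:ℝ)..1, Phi S r (u * t) t ω)) := by
  have hq : 0 < S.σ - 1 := by linarith [S.hσ]
  have hP : 0 < Psi S r t ω := Real.exp_pos _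
  have hhp : 0 < hProc S h (cR S k r) t ω := by
    unfold hProc
    refine mul_pos (Real.exp_pos _) (add_pos_of_pos_of_nonneg hh (mul_nonneg S.hρ₀.le ?_))
    refine intervalIntegral.integral_nonneg ht fun s _ => ?_
    unfold cR; positivity
  rw [← hProc_Psi]
  set H := hProc S h (cR S k r) t ω
  have e1 : (H ^ S.γ / cR S k r t ω) ^ (S.σ - 1) =
      H ^ (S.γ * (S.σ - 1)) * ((r * k) ^ (-(S.σ - 1)) * Psi S r t ω) := by
    have hc : 0 < cR S k r t ω := by unfold cR; positivity
    rw [Real.div_rpow (by positivity) hc.le, ← Real.rpow_mul hhp.le, div_eq_mul_inv,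
      ← Real.rpow_neg hc.le]
    congr 1
    unfold cR Psi
    rw [Real.mul_rpow (by positivity) (by positivity), ← Real.exp_mul]
    congr 2
    ring
  have e2 : H ^ (S.γ * (S.σ - 1)) ≤ 1 + H := by
    have h0 : 0 ≤ S.γ * (S.σ - 1) := mul_nonneg S.hγ₀ hq.le
    rcases le_total H 1 with h1 | h1
    · linarith [Real.rpow_le_one hhp.le h1 h0]
    · have := Real.rpow_le_rpow_of_exponent_le h1 hγσ
      rw [Real.rpow_one] at this
      linarith
  rw [e1]
  have hK : 0 < (S.σ - 1)⁻¹ * (r * k) ^ (-(S.σ - 1)) * Real.exp (-S.θ * t) := by positivity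
  have e3 := mul_le_mul_of_nonneg_left e2 (mul_pos hK hP).le
  calc _ = (S.σ - 1)⁻¹ * (r * k) ^ (-(S.σ - 1)) * Real.exp (-S.θ * t) * Psi S r t ω *
        H ^ (S.γ * (S.σ - 1)) := by ring
    _ ≤ _ := e3
    _ = _ := by ring

lemma Jcost_finite (S : Setting Ω) (hγσ : S.γ * (S.σ - 1) ≤ 1) {k h r : ℝ} (hk : 0 < k)
    (hh : 0 < h) (hr : 0 < r) (hBr : S.B ≤ r) (hrate : rate S r < S.θ) :
    Jcost S k h (cR S k r) < ⊤ := by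
  have := S.isProb
  have hq : 0 < S.σ - 1 := by linarith [S.hσ]
  have hρ := S.hρ₀
  set K := (S.σ - 1)⁻¹ * (r * k) ^ (-(S.σ - 1)) with hKdef
  have hK : 0 < K := by positivity
  let G : Ω → ℝ → ℝ≥0∞ := fun ω t => ENNReal.ofReal (K * Real.exp (-S.θ * t)) *
    (ENNReal.ofReal (Psi S r t ω) + (ENNReal.ofReal h * ENNReal.ofReal (Phi S r 0 t ω) +
      ENNReal.ofReal (S.ρ * (r * k) * t) *
        ∫⁻ u in Set.Ioc (0:ℝ) 1, ENNReal.ofReal (Phi S r (u * t) t ω)))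
  have hG : Measurable (Function.uncurry G) := by
    have a1 : Measurable fun p : Ω × ℝ => Psi S r p.2 p.1 := Psi_meas S r measurable_snd measurable_fst
    have a2 : Measurable fun p : Ω × ℝ => Phi S r 0 p.2 p.1 :=
      Phi_meas S r measurable_const measurable_snd measurable_fst
    have a3 : Measurable fun p : Ω × ℝ =>
      ∫⁻ u in Set.Ioc (0:ℝ) 1, ENNReal.ofReal (Phi S r (u * p.2) p.2 p.1) :=
      I_meas S r measurable_snd measurable_fst
    have a4 : Measurable fun p : Ω × ℝ => ENNReal.ofReal (K * Real.exp (-S.θ * p.2)) := by fun_prop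
    have a5 : Measurable fun p : Ω × ℝ => ENNReal.ofReal (S.ρ * (r * k) * p.2) := by fun_prop
    exact a4.mul (a1.ennreal_ofReal.add ((a2.ennreal_ofReal.const_mul _).add (a5.mul a3)))
  have h1 : Jcost S k h (cR S k r) ≤ ∫⁻ ω, (∫⁻ t in Set.Ioi (0:ℝ), G ω t) ∂S.P := by
    unfold Jcost
    refine lintegral_mono fun ω => ?_
    refine setLIntegral_mono' measurableSet_Ioi fun t ht => ?_
    have ht0 : 0 ≤ t := le_of_lt ht
    refine (ENNReal.ofReal_le_ofReal (integrand_bd S hγσ hk hh hr ht0 ω)).trans ?_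
    have p1 : 0 < Psi S r t ω := Real.exp_pos _
    have p2 : ∀ s, 0 < Phi S r s t ω := fun s => Real.exp_pos _
    have p3 : 0 ≤ ∫ u in (0:ℝ)..1, Phi S r (u * t) t ω :=
      intervalIntegral.integral_nonneg zero_le_one fun u _ => (p2 _).le
    have p4 := p2 0
    have hc : Continuous fun u => Phi S r (u * t) t ω := by
      have c1 := S.bm1.cont ω
      have c2 := S.bm2.cont ω
      unfold Phi
      fun_prop
    have p5 : ENNReal.ofReal (∫ u in (0:ℝ)..1, Phi S r (u * t) t ω) =
        ∫⁻ u in Set.Ioc (0:ℝ) 1, ENNReal.ofReal (Phi S r (u * t) t ω) := by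
      rw [intervalIntegral.integral_of_le zero_le_one]
      refine ofReal_integral_eq_lintegral_ofReal ?_ (Filter.Eventually.of_forall fun _ => (p2 _).le)
      exact hc.integrableOn_Ioc
    simp only [G]
    rw [ENNReal.ofReal_mul (by positivity), ENNReal.ofReal_add p1.le (by positivity),
      ENNReal.ofReal_add (by positivity) (by positivity), ENNReal.ofReal_mul hh.le,
      ENNReal.ofReal_mul (p := S.ρ * (r * k) * t) (by positivity), p5]
  have h2 : ∫⁻ ω, (∫⁻ t in Set.Ioi (0:ℝ), G ω t) ∂S.P = ∫⁻ t in Set.Ioi (0:ℝ), ∫⁻ ω, G ω t ∂S.P :=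
    lintegral_lintegral_swap hG.aemeasurable
  have h3 : ∫⁻ t in Set.Ioi (0:ℝ), ∫⁻ ω, G ω t ∂S.P ≤ ∫⁻ t in Set.Ioi (0:ℝ),
      ENNReal.ofReal (K * Real.exp (-S.θ * t) * (Real.exp (rate S r * t) + (h * Real.exp (rate S r * t)
        + S.ρ * (r * k) * t * Real.exp (rate S r * t)))) := by
    refine setLIntegral_mono' measurableSet_Ioi fun t ht => ?_
    have ht0 : 0 ≤ t := le_of_lt ht
    have a1 : Measurable fun ω => Psi S r t ω := Psi_meas S r measurable_const measurable_id
    have a2 : Measurable fun ω => Phi S r 0 t ω :=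
      Phi_meas S r measurable_const measurable_const measurable_id
    have a3 : Measurable fun ω => ∫⁻ u in Set.Ioc (0:ℝ) 1, ENNReal.ofReal (Phi S r (u * t) t ω) :=
      I_meas S r measurable_const measurable_id
    have b3 : ∫⁻ ω, (∫⁻ u in Set.Ioc (0:ℝ) 1, ENNReal.ofReal (Phi S r (u * t) t ω)) ∂S.P ≤
        ENNReal.ofReal (Real.exp (rate S r * t)) := by
      rw [lintegral_lintegral_swap]
      · calc _ ≤ ∫⁻ u in Set.Ioc (0:ℝ) 1, ENNReal.ofReal (Real.exp (rate S r * t)) := by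
              refine setLIntegral_mono' measurableSet_Ioc fun u hu => ?_
              exact Phi_bd S hBr (mul_nonneg hu.1.le ht0) (mul_le_of_le_one_left ht0 hu.2)
          _ = _ := by simp
      · refine (ENNReal.measurable_ofReal.comp ?_).aemeasurable
        exact Phi_meas S r (α := Ω × ℝ) (by fun_prop) (by fun_prop) (by fun_prop)
    simp only [G]
    rw [lintegral_const_mul' _ _ ENNReal.ofReal_ne_top, lintegral_add_left a1.ennreal_ofReal,
      lintegral_add_left (a2.ennreal_ofReal.const_mul _), lintegral_const_mul' _ _ ENNReal.ofReal_ne_top,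
      lintegral_const_mul' _ _ ENNReal.ofReal_ne_top]
    rw [ENNReal.ofReal_mul (p := K * Real.exp (-S.θ * t)) (by positivity),
      ENNReal.ofReal_add (by positivity) (by positivity),
      ENNReal.ofReal_add (by positivity) (by positivity), ENNReal.ofReal_mul hh.le,
      ENNReal.ofReal_mul (p := S.ρ * (r * k) * t) (by positivity)]
    have b1 := Psi_bd S (r := r) ht0
    have b2 := Phi_bd S hBr le_rfl ht0
    gcongr
  have hd : 0 < S.θ - rate S r := by linarith
  have i0 := integrableOn_rpow_mul_exp_neg_mul_rpow (s := 0) (p := 1) (by norm_num) one_pos hd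
  have i1 := integrableOn_rpow_mul_exp_neg_mul_rpow (s := 1) (p := 1) (by norm_num) one_pos hd
  have i2 : IntegrableOn (fun t => K * Real.exp (-S.θ * t) * (Real.exp (rate S r * t) +
      (h * Real.exp (rate S r * t) + S.ρ * (r * k) * t * Real.exp (rate S r * t)))) (Set.Ioi (0:ℝ)) := by
    refine ((i0.const_mul (K * (1 + h))).add (i1.const_mul (K * S.ρ * (r * k)))).congr ?_
    refine Filter.Eventually.of_forall fun t => ?_
    have : Real.exp (-(S.θ - rate S r) * t) = Real.exp (-S.θ * t) * Real.exp (rate S r * t) := by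
      rw [← Real.exp_add]; congr 1; ring
    simp only [Pi.add_apply, Real.rpow_zero, Real.rpow_one, this]
    ring
  refine lt_of_le_of_lt (h1.trans (h2.le.trans h3)) ?_
  exact i2.lintegral_lt_top

lemma Vcost_finite (S : Setting Ω) (hA : Assumption1 S) (hγσ : S.γ * (S.σ - 1) ≤ 1) {k h : ℝ}
    (hk : 0 < k) (hh : 0 < h) : Vcost S k h ≠ ⊤ := by
  obtain ⟨hBR, hγ, hA1, hA2⟩ := hA
  have hq : 0 < S.σ - 1 := by linarith [S.hσ]
  have hγ1 := S.hγ₁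
  set q := S.σ - 1
  set lam := max 2 (1 / (S.γ * q)) with hlam
  have l1 : 2 ≤ lam := le_max_left _ _
  have l2 : 1 / (S.γ * q) ≤ lam := le_max_right _ _
  have l3 : 1 ≤ lam * (S.γ * q) := by rwa [div_le_iff₀ (by positivity)] at l2
  have hb1 : 0 < S.β₁ ^ 2 := pow_pos S.hβ₁ 2
  have hb2 : 0 < S.β₂ ^ 2 := pow_pos S.hβ₂ 2
  have hθ : q * (S.β₁ ^ 2 * (1 - S.γ) / 2 + lam * q * (S.β₁ ^ 2 + S.γ ^ 2 * S.β₂ ^ 2)) < S.θ := by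
    rcases le_or_gt (S.ρ + (S.β₂ ^ 2 - S.β₁ ^ 2) / 2) 0 with h0 | h0
    · refine lt_of_le_of_lt (mul_le_mul_of_nonneg_left ?_ hq.le) (hA1 h0)
      have := mul_le_mul_of_nonneg_left h0 hγ.le
      nlinarith
    · exact hA2 h0
  have key : S.β₁ ^ 2 * (q + q ^ 2) / 2 < S.θ := by
    refine lt_of_le_of_lt ?_ hθ
    have m1 : 1 ≤ lam * q := by
      have : lam * (S.γ * q) ≤ lam * q := by
        refine mul_le_mul_of_nonneg_left ?_ (by linarith)
        nlinarith
      linarith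
    have m2 : q ≤ lam * q - q := by nlinarith
    have m3 : (1 + q) / 2 ≤ (1 - S.γ) / 2 + lam * q := by nlinarith
    have m4 : 0 ≤ lam * q * (S.γ ^ 2 * S.β₂ ^ 2) := by positivity
    have m5 := mul_le_mul_of_nonneg_left m3 (mul_pos hq hb1).le
    have m6 := mul_nonneg hq.le m4
    nlinarith
  -- choose r
  let ε : ℝ := (S.θ - S.β₁ ^ 2 * (q + q ^ 2) / 2) / (2 * q)
  have hε : 0 < ε := div_pos (by linarith) (by positivity)
  have hqε : q * ε = (S.θ - S.β₁ ^ 2 * (q + q ^ 2) / 2) / 2 := by simp only [ε]; field_simp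
  let r := min S.R (S.B + ε)
  have hrB : S.B ≤ r := le_min hBR (by linarith)
  have hr0 : 0 < r := lt_min S.hR (by linarith [S.hB])
  have hrate : rate S r < S.θ := by
    have h1 : r - S.B ≤ ε := by linarith [min_le_right S.R (S.B + ε)]
    have h2 := mul_le_mul_of_nonneg_left h1 hq.le
    have : rate S r = q * (r - S.B) + S.β₁ ^ 2 * (q + q ^ 2) / 2 := rfl
    linarith
  have hfin := Jcost_finite S hγσ hk hh hr0 hrB hrate
  have hadm := cR_adm S hk hh hr0 (min_le_left _ _)
  have hle : Vcost S k h ≤ Jcost S k h (cR S k r) :=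
    iInf_le (fun c : {c : ℝ → Ω → ℝ // IsAdmissible S k h c} => Jcost S k h c.1) ⟨_, hadm⟩
  exact (lt_of_le_of_lt hle hfin).ne

/-- Under Assumption 1 and `γ(σ-1) ≤ 1`, the value function is finite-valued and continuous
on `(0,∞)²`. -/
theorem V_continuous (S : Setting Ω) (hA : Assumption1 S) (hγσ : S.γ * (S.σ - 1) ≤ 1) :
    (∀ k h : ℝ, 0 < k → 0 < h → V S k h ≠ ⊥) ∧
      ContinuousOn (fun z : ℝ × ℝ => (V S z.1 z.2).toReal)
        (Set.Ioi (0:ℝ) ×ˢ Set.Ioi (0:ℝ)) := by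

  have hf : ∀ k h : ℝ, 0 < k → 0 < h → Vcost S k h ≠ ⊤ := fun k h hk hh => Vcost_finite S hA hγσ hk hh
  refine ⟨fun k h hk hh => ?_, V_cont_of_finite S hf⟩
  have := hf k h hk hh
  simpa [V] using this

end HabitModel
end
end

section
/- For every p ≥ 1 there exists a constant C > 0, depending only on p and the model parameters (B, β₁, β₂, ρ, θ, σ, γ, R), such that for every (k₀,h₀) ∈ (0,∞)², every admissible control c ∈ 𝓐(k₀,h₀), and every t ≥ 0: E[ |(k_t, h_t)|^p ] ≤ C·(1 + t^{p−1/2})·|(k₀,h₀)|^p·exp{ p·( B + ((2p−1)·β₁² + 4p·β₂²)/2 )·t }, where |·| denotes the Euclidean norm on ℝ² and (k,h) is the state pair associated with c starting from (k₀,h₀). -/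
open MeasureTheory ProbabilityTheory Real Set Matrix
open scoped ENNReal NNReal

noncomputable section

namespace HabitModel

variable {Ω : Type*} [mΩ : MeasurableSpace Ω]

lemma aux_gexp {P : Measure Ω} {F : Filtration ℝ mΩ} {W : ℝ → Ω → ℝ} (h : IsStdBM P F W)
    (s t : ℝ) (hs : 0 ≤ s) (hst : s ≤ t) (a b : ℝ) :
    ∫⁻ ω, ENNReal.ofReal (Real.exp (a + b * (W t ω - W s ω))) ∂P
      = ENNReal.ofReal (Real.exp (a + b ^ 2 * (t - s) / 2)) := by
  have hm : ∀ r, Measurable (W r) := fun r => (h.adapted r).mono (F.le r) le_rfl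
  have hX : Measurable (fun ω => W t ω - W s ω) := (hm t).sub (hm s)
  have hg := h.gauss_incr s t hs hst
  have hmgf := mgf_gaussianReal hg b
  have hint : Integrable (fun ω => Real.exp (b * (W t ω - W s ω))) P := by
    have := integrable_exp_mul_gaussianReal (μ := 0) (v := Real.toNNReal (t - s)) b
    rw [← hg] at this
    exact (integrable_map_measure (by fun_prop) hX.aemeasurable).1 this
  rw [← ofReal_integral_eq_lintegral_ofReal]
  · congr 1
    simp_rw [Real.exp_add]
    rw [integral_const_mul]
    congr 1
    rw [mgf] at hmgf
    rw [hmgf, Real.coe_toNNReal _ (by linarith)]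
    congr 1
    ring
  · simp_rw [Real.exp_add]
    exact hint.const_mul _
  · exact Filter.Eventually.of_forall fun ω => (Real.exp_pos _).le

lemma aux_jensen (f : ℝ → ℝ≥0∞) (hf : Measurable f) (t p : ℝ) (ht : 0 ≤ t) (hp : 1 ≤ p) :
    (∫⁻ s in Set.Ioc 0 t, f s) ^ p
      ≤ ENNReal.ofReal t ^ (p - 1) * ∫⁻ s in Set.Ioc 0 t, f s ^ p := by
  have hp0 : 0 < p := by linarith
  have h := eLpNorm'_le_eLpNorm'_mul_rpow_measure_univ (μ := volume.restrict (Set.Ioc 0 t))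
    one_pos hp hf.aestronglyMeasurable
  simp only [eLpNorm', enorm_eq_self, ENNReal.rpow_one, div_one, one_div] at h
  have h2 := ENNReal.rpow_le_rpow h hp0.le
  rw [ENNReal.mul_rpow_of_nonneg _ _ hp0.le, ← ENNReal.rpow_mul, ← ENNReal.rpow_mul,
    inv_mul_cancel₀ hp0.ne'] at h2
  simp only [inv_one, ENNReal.rpow_one, Measure.restrict_apply_univ, Real.volume_Ioc, sub_zero] at h2
  rw [mul_comm, sub_mul, one_mul, inv_mul_cancel₀ hp0.ne'] at h2
  simpa using h2

/-- The dominating kernel. -/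
def Gk (S : Setting Ω) (t s : ℝ) (ω : Ω) : ℝ :=
  Real.exp ((S.B - S.β₁ ^ 2 / 2) * s + S.β₁ * S.W1 s ω) *
    Real.exp ((-S.ρ - S.β₂ ^ 2 / 2) * (t - s) + S.β₂ * (S.W2 t ω - S.W2 s ω))

lemma Gk_pos (S : Setting Ω) (t s : ℝ) (ω : Ω) : 0 < Gk S t s ω :=
  mul_pos (Real.exp_pos _) (Real.exp_pos _)

lemma Gk_cont (S : Setting Ω) (t : ℝ) (ω : Ω) : Continuous fun s => Gk S t s ω := by
  have h1 := S.bm1.cont ω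
  have h2 := S.bm2.cont ω
  unfold Gk
  fun_prop

lemma Gk_meas (S : Setting Ω) (t s : ℝ) : Measurable (Gk S t s) := by
  have h1 : ∀ r, Measurable (S.W1 r) := fun r => (S.bm1.adapted r).mono (S.F.le r) le_rfl
  have h2 : ∀ r, Measurable (S.W2 r) := fun r => (S.bm2.adapted r).mono (S.F.le r) le_rfl
  have := h1 s
  have := h2 s
  have := h2 t
  unfold Gk
  fun_prop

lemma Gk_moment (S : Setting Ω) (p : ℝ) (hp : 1 ≤ p) (t s : ℝ) (hs : 0 ≤ s) (hst : s ≤ t) :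
    ∫⁻ ω, ENNReal.ofReal (Gk S t s ω ^ p) ∂S.P
      ≤ ENNReal.ofReal (Real.exp ((p * S.B + p * (p - 1) / 2 * (S.β₁ ^ 2 + S.β₂ ^ 2)) * t)) := by
  have h1 : Measurable[S.F s] (S.W1 s) := S.bm1.adapted s
  have e : ∀ ω, ENNReal.ofReal (Gk S t s ω ^ p) =
      ENNReal.ofReal (Real.exp (p * ((-S.ρ - S.β₂ ^ 2 / 2) * (t - s)) +
          (p * S.β₂) * (S.W2 t ω - S.W2 s ω))) *
      ENNReal.ofReal (Real.exp (p * ((S.B - S.β₁ ^ 2 / 2) * s) +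
          (p * S.β₁) * (S.W1 s ω - S.W1 0 ω))) := by
    intro ω
    rw [← ENNReal.ofReal_mul (Real.exp_pos _).le, Gk, ← Real.exp_add, ← Real.exp_add,
      ← Real.exp_mul, S.bm1.init]
    congr 2
    ring
  simp_rw [e]
  have hm2 : ∀ r, Measurable (S.W2 r) := fun r => (S.bm2.adapted r).mono (S.F.le r) le_rfl
  rw [lintegral_mul_eq_lintegral_mul_lintegral_of_independent_measurableSpace
    (((hm2 t).sub (hm2 s)).comap_le) (S.F.le s) (S.bm2.indep_incr s t hs hst)]
  · rw [aux_gexp S.bm2 s t hs hst, aux_gexp S.bm1 0 s le_rfl hs,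
      ← ENNReal.ofReal_mul (Real.exp_pos _).le, ← Real.exp_add]
    apply ENNReal.ofReal_le_ofReal
    apply Real.exp_le_exp.2
    have hB := S.hB
    have hρ := S.hρ₀
    have q1 : 0 ≤ p * S.ρ * (t - s) :=
      mul_nonneg (mul_nonneg (by linarith) hρ.le) (by linarith)
    have q2 : 0 ≤ p * S.B * (t - s) := mul_nonneg (mul_nonneg (by linarith) hB) (by linarith)
    have q3 : 0 ≤ p * (p - 1) / 2 * S.β₁ ^ 2 * (t - s) :=
      mul_nonneg (mul_nonneg (by nlinarith) (sq_nonneg _)) (by linarith)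
    have q4 : 0 ≤ p * (p - 1) / 2 * S.β₂ ^ 2 * s :=
      mul_nonneg (mul_nonneg (by nlinarith) (sq_nonneg _)) hs
    nlinarith
  · have : Measurable (fun x : ℝ => ENNReal.ofReal (Real.exp
        (p * ((-S.ρ - S.β₂ ^ 2 / 2) * (t - s)) + (p * S.β₂) * x))) := by fun_prop
    exact this.comp (comap_measurable _)
  · have : Measurable (fun x : ℝ => ENNReal.ofReal (Real.exp
        (p * ((S.B - S.β₁ ^ 2 / 2) * s) + (p * S.β₁) * (x - 0)))) := by fun_prop
    simp_rw [S.bm1.init]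
    exact this.comp h1

lemma Gint_moment (S : Setting Ω) (p : ℝ) (hp : 1 ≤ p) (t : ℝ) (ht : 0 ≤ t) :
    ∫⁻ ω, ENNReal.ofReal ((∫ s in (0:ℝ)..t, Gk S t s ω) ^ p) ∂S.P
      ≤ ENNReal.ofReal (t ^ p *
        Real.exp ((p * S.B + p * (p - 1) / 2 * (S.β₁ ^ 2 + S.β₂ ^ 2)) * t)) := by
  have := S.isProb
  have hp0 : 0 ≤ p := by linarith
  have hj : Measurable (Function.uncurry (Gk S t)) :=
    measurable_uncurry_of_continuous_of_measurable (Gk_cont S t) (Gk_meas S t)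
  have step : ∀ ω, ENNReal.ofReal ((∫ s in (0:ℝ)..t, Gk S t s ω) ^ p) ≤
      ENNReal.ofReal t ^ (p - 1) * ∫⁻ s in Set.Ioc 0 t, ENNReal.ofReal (Gk S t s ω ^ p) := by
    intro ω
    have hc := Gk_cont S t ω
    have h0 : 0 ≤ ∫ s in (0:ℝ)..t, Gk S t s ω :=
      intervalIntegral.integral_nonneg ht fun s _ => (Gk_pos S t s ω).le
    rw [← ENNReal.ofReal_rpow_of_nonneg h0 hp0, intervalIntegral.integral_of_le ht,
      ofReal_integral_eq_lintegral_ofReal]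
    · refine (aux_jensen _ hc.measurable.ennreal_ofReal t p ht hp).trans_eq ?_
      congr 1
      refine lintegral_congr fun s => ?_
      rw [ENNReal.ofReal_rpow_of_nonneg (Gk_pos S t s ω).le hp0]
    · exact (intervalIntegrable_iff_integrableOn_Ioc_of_le ht).1 (hc.intervalIntegrable 0 t)
    · exact Filter.Eventually.of_forall fun s => (Gk_pos S t s ω).le
  have hjp : Measurable (fun z : Ω × ℝ => ENNReal.ofReal (Gk S t z.2 z.1 ^ p)) := by
    have : Measurable (fun z : Ω × ℝ => Gk S t z.2 z.1) := hj.comp measurable_swap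
    fun_prop
  refine (lintegral_mono step).trans ?_
  rw [lintegral_const_mul' _ _ (by finiteness [show 0 ≤ p - 1 by linarith]),
    lintegral_lintegral_swap hjp.aemeasurable]
  have : ∫⁻ s in Set.Ioc 0 t, ∫⁻ ω, ENNReal.ofReal (Gk S t s ω ^ p) ∂S.P ≤
      ∫⁻ s in Set.Ioc 0 t, ENNReal.ofReal
        (Real.exp ((p * S.B + p * (p - 1) / 2 * (S.β₁ ^ 2 + S.β₂ ^ 2)) * t)) :=
    setLIntegral_mono measurable_const fun s hs => Gk_moment S p hp t s hs.1.le hs.2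
  refine (mul_le_mul_right this _).trans_eq ?_
  rw [setLIntegral_const, Real.volume_Ioc, sub_zero,
    ENNReal.ofReal_rpow_of_nonneg ht (by linarith), ← ENNReal.ofReal_mul (Real.exp_pos _).le,
    ← ENNReal.ofReal_mul (Real.rpow_nonneg ht _)]
  congr 1
  have : t ^ p = t ^ (p - 1) * t := by
    rcases ht.eq_or_lt with h | h
    · rw [← h, Real.zero_rpow (by linarith)]; simp
    · rw [Real.rpow_sub_one h.ne']; field_simp
  rw [this]; ring

lemma aux_state (S : Setting Ω) (k₀ h₀ : ℝ) (hk : 0 < k₀) (hh : 0 < h₀) (c : ℝ → Ω → ℝ)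
    (hc : IsAdmissible S k₀ h₀ c) (t : ℝ) (ht : 0 ≤ t) :
    ∀ᵐ ω ∂S.P, 0 ≤ kProc S k₀ c t ω ∧ 0 ≤ hProc S h₀ c t ω ∧
      kProc S k₀ c t ω ≤ k₀ * Gk S t t ω ∧
      hProc S h₀ c t ω ≤ h₀ * Gk S t 0 ω + S.ρ * S.R * k₀ * ∫ s in (0:ℝ)..t, Gk S t s ω := by
  filter_upwards [hc.cpos, hc.kpos, hc.hpos, hc.cbdd] with ω h1 h2 h3 h4
  have hkle : ∀ s, 0 ≤ s →
      kProc S k₀ c s ω ≤ k₀ * Real.exp ((S.B - S.β₁ ^ 2 / 2) * s + S.β₁ * S.W1 s ω) := by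
    intro s hs
    unfold kProc
    rw [mul_comm]
    apply mul_le_mul_of_nonneg_right _ (Real.exp_pos _).le
    have : 0 ≤ ∫ r in (0:ℝ)..s,
        c r ω * Real.exp (-((S.B - S.β₁ ^ 2 / 2) * r) - S.β₁ * S.W1 r ω) := by
      rw [intervalIntegral.integral_of_le hs]
      apply integral_nonneg_of_ae
      filter_upwards [ae_restrict_of_ae_restrict_of_subset
        (Set.Ioc_subset_Icc_self.trans Set.Icc_subset_Ici_self) h1] with r hr
      exact mul_nonneg hr.le (Real.exp_pos _).le
    linarith
  refine ⟨(h2 t ht).le, (h3 t ht).le, ?_, ?_⟩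
  · have := hkle t ht
    simpa [Gk] using this
  · have hcont := S.bm1.cont ω
    have hcont2 := S.bm2.cont ω
    have key : ∫ s in (0:ℝ)..t,
          c s ω * Real.exp ((S.ρ + S.β₂ ^ 2 / 2) * s - S.β₂ * S.W2 s ω) ≤
        ∫ s in (0:ℝ)..t, (S.R * k₀ * Real.exp ((S.B - S.β₁ ^ 2 / 2) * s + S.β₁ * S.W1 s ω)) *
          Real.exp ((S.ρ + S.β₂ ^ 2 / 2) * s - S.β₂ * S.W2 s ω) := by
      rw [intervalIntegral.integral_of_le ht, intervalIntegral.integral_of_le ht]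
      have hsub := (Set.Ioc_subset_Icc_self.trans Set.Icc_subset_Ici_self : Set.Ioc 0 t ⊆ Set.Ici 0)
      apply integral_mono_of_nonneg
      · filter_upwards [ae_restrict_of_ae_restrict_of_subset hsub h1] with r hr
        exact mul_nonneg hr.le (Real.exp_pos _).le
      · refine (intervalIntegrable_iff_integrableOn_Ioc_of_le ht).1
          (Continuous.intervalIntegrable ?_ 0 t)
        fun_prop
      · filter_upwards [ae_restrict_of_ae_restrict_of_subset hsub h4,
          ae_restrict_mem measurableSet_Ioc] with r hr hr'
        apply mul_le_mul_of_nonneg_right _ (Real.exp_pos _).le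
        refine hr.trans ?_
        rw [mul_assoc]
        exact mul_le_mul_of_nonneg_left (hkle r hr'.1.le) S.hR.le
    unfold hProc
    have hGG : S.ρ * S.R * k₀ * ∫ s in (0:ℝ)..t, Gk S t s ω =
        Real.exp ((-S.ρ - S.β₂ ^ 2 / 2) * t + S.β₂ * S.W2 t ω) * (S.ρ *
        ∫ s in (0:ℝ)..t, (S.R * k₀ * Real.exp ((S.B - S.β₁ ^ 2 / 2) * s + S.β₁ * S.W1 s ω)) *
          Real.exp ((S.ρ + S.β₂ ^ 2 / 2) * s - S.β₂ * S.W2 s ω)) := by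
      rw [← intervalIntegral.integral_const_mul, ← intervalIntegral.integral_const_mul,
        ← intervalIntegral.integral_const_mul]
      congr 1
      funext s
      have : Real.exp ((-S.ρ - S.β₂ ^ 2 / 2) * (t - s) + S.β₂ * (S.W2 t ω - S.W2 s ω)) =
        Real.exp ((-S.ρ - S.β₂ ^ 2 / 2) * t + S.β₂ * S.W2 t ω) *
          Real.exp ((S.ρ + S.β₂ ^ 2 / 2) * s - S.β₂ * S.W2 s ω) := by
        rw [← Real.exp_add]; congr 1; ring
      rw [Gk, this]; ring
    have hG0 : Gk S t 0 ω = Real.exp ((-S.ρ - S.β₂ ^ 2 / 2) * t + S.β₂ * S.W2 t ω) := by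
      simp [Gk, S.bm1.init, S.bm2.init]
    rw [hGG, hG0, mul_comm h₀, ← mul_add]
    apply mul_le_mul_of_nonneg_left _ (Real.exp_pos _).le
    have := mul_le_mul_of_nonneg_left key S.hρ₀.le
    linarith

lemma aux_three (p : ℝ) (hp : 1 ≤ p) (a b c : ℝ) (ha : 0 ≤ a) (hb : 0 ≤ b) (hc : 0 ≤ c) :
    (a + b + c) ^ p ≤ 3 ^ p * (a ^ p + b ^ p + c ^ p) := by
  have hp0 : 0 ≤ p := by linarith
  have qa := Real.rpow_nonneg ha p
  have qb := Real.rpow_nonneg hb p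
  have qc := Real.rpow_nonneg hc p
  have main : ∀ m, 0 ≤ m → a ≤ m → b ≤ m → c ≤ m → m ^ p ≤ a ^ p + b ^ p + c ^ p →
      (a + b + c) ^ p ≤ 3 ^ p * (a ^ p + b ^ p + c ^ p) := by
    intro m hm h1 h2 h3 h4
    calc (a + b + c) ^ p ≤ (3 * m) ^ p :=
          Real.rpow_le_rpow (by positivity) (by linarith) hp0
      _ = 3 ^ p * m ^ p := Real.mul_rpow (by norm_num) hm
      _ ≤ _ := mul_le_mul_of_nonneg_left h4 (by positivity)
  rcases le_total a b with h | h <;> rcases le_total b c with h' | h' <;>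
    rcases le_total a c with h'' | h''
  all_goals first
    | exact main a ha le_rfl (by linarith) (by linarith) (by linarith)
    | exact main b hb (by linarith) le_rfl (by linarith) (by linarith)
    | exact main c hc (by linarith) (by linarith) le_rfl (by linarith)

lemma aux_final (S : Setting Ω) (p : ℝ) (hp : 1 ≤ p) (t : ℝ) (ht : 0 ≤ t) (n q : ℝ) (hn : 0 ≤ n)
    (hq : 0 ≤ q) :
    3 ^ p * n * (2 * Real.exp ((p * S.B + p * (p - 1) / 2 * (S.β₁ ^ 2 + S.β₂ ^ 2)) * t) +
      q * (t ^ p * Real.exp ((p * S.B + p * (p - 1) / 2 * (S.β₁ ^ 2 + S.β₂ ^ 2)) * t))) ≤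
    (3 ^ p * (2 + q * (1 + 2 / S.β₁ ^ 2))) * (1 + t ^ (p - 1 / 2)) * n *
      Real.exp (p * (S.B + ((2 * p - 1) * S.β₁ ^ 2 + 4 * p * S.β₂ ^ 2) / 2) * t) := by
  set K := (p * S.B + p * (p - 1) / 2 * (S.β₁ ^ 2 + S.β₂ ^ 2)) with hK
  set L := p * (S.B + ((2 * p - 1) * S.β₁ ^ 2 + 4 * p * S.β₂ ^ 2) / 2) with hL
  have hb : 0 < S.β₁ ^ 2 := pow_pos S.hβ₁ 2
  have hb2 : 0 < S.β₂ ^ 2 := pow_pos S.hβ₂ 2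
  have hKL : K + S.β₁ ^ 2 / 2 ≤ L := by
    have h1 : 0 ≤ (p ^ 2 - 1) * S.β₁ ^ 2 := mul_nonneg (by nlinarith) hb.le
    have h2 : 0 ≤ (3 * p ^ 2 + p) * S.β₂ ^ 2 := mul_nonneg (by nlinarith) hb2.le
    rw [hK, hL]; nlinarith
  have hu : 0 ≤ t ^ (p - 1 / 2) := Real.rpow_nonneg ht _
  have e1 : Real.exp (K * t) * Real.exp (S.β₁ ^ 2 / 2 * t) ≤ Real.exp (L * t) := by
    rw [← Real.exp_add]; apply Real.exp_le_exp.2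
    nlinarith [mul_le_mul_of_nonneg_right hKL ht]
  have e2 : 1 + S.β₁ ^ 2 / 2 * t ≤ Real.exp (S.β₁ ^ 2 / 2 * t) := by
    linarith [Real.add_one_le_exp (S.β₁ ^ 2 / 2 * t)]
  have e3 : Real.exp (K * t) ≤ Real.exp (L * t) := by
    refine le_trans ?_ e1
    have : 1 ≤ Real.exp (S.β₁ ^ 2 / 2 * t) := by
      have : 0 ≤ S.β₁ ^ 2 / 2 * t := by positivity
      linarith
    nlinarith [Real.exp_pos (K * t)]
  have e4 : t ^ (1 / 2 : ℝ) ≤ (1 + 2 / S.β₁ ^ 2) * Real.exp (S.β₁ ^ 2 / 2 * t) := by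
    have a1 : t ^ (1 / 2 : ℝ) ≤ 1 + t := by
      rw [← Real.sqrt_eq_rpow]
      exact Real.sqrt_le_iff.2 ⟨by linarith, by nlinarith⟩
    have a2 : 1 + t ≤ (1 + 2 / S.β₁ ^ 2) * (1 + S.β₁ ^ 2 / 2 * t) := by
      have hne : S.β₁ ≠ 0 := S.hβ₁.ne'
      have : (1 + 2 / S.β₁ ^ 2) * (1 + S.β₁ ^ 2 / 2 * t) =
        1 + t + (2 / S.β₁ ^ 2 + S.β₁ ^ 2 / 2 * t) := by field_simp; ring
      rw [this]
      have : 0 ≤ 2 / S.β₁ ^ 2 + S.β₁ ^ 2 / 2 * t := by positivity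
      linarith
    exact a1.trans (a2.trans (mul_le_mul_of_nonneg_left e2 (by positivity)))
  have e5 : t ^ p = t ^ (p - 1 / 2) * t ^ (1 / 2 : ℝ) := by
    rw [← Real.rpow_add_of_nonneg ht (by linarith) (by norm_num)]
    congr 1; ring
  have e6 : t ^ p * Real.exp (K * t) ≤
      t ^ (p - 1 / 2) * ((1 + 2 / S.β₁ ^ 2) * Real.exp (L * t)) := by
    rw [e5, mul_assoc]
    apply mul_le_mul_of_nonneg_left _ hu
    calc t ^ (1 / 2 : ℝ) * Real.exp (K * t)
        ≤ ((1 + 2 / S.β₁ ^ 2) * Real.exp (S.β₁ ^ 2 / 2 * t)) * Real.exp (K * t) :=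
          mul_le_mul_of_nonneg_right e4 (Real.exp_pos _).le
      _ = (1 + 2 / S.β₁ ^ 2) * (Real.exp (K * t) * Real.exp (S.β₁ ^ 2 / 2 * t)) := by ring
      _ ≤ _ := mul_le_mul_of_nonneg_left e1 (by positivity)
  have e7 := mul_le_mul_of_nonneg_left e6 hq
  have hD : 0 ≤ 1 + 2 / S.β₁ ^ 2 := by positivity
  calc _ ≤ 3 ^ p * n * ((2 + q * (1 + 2 / S.β₁ ^ 2)) * (1 + t ^ (p - 1 / 2)) *
        Real.exp (L * t)) := by
        apply mul_le_mul_of_nonneg_left _ (by positivity)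
        have r1 : 0 ≤ t ^ (p - 1 / 2) * Real.exp (L * t) := by positivity
        have r2 : 0 ≤ q * (1 + 2 / S.β₁ ^ 2) * Real.exp (L * t) := by positivity
        nlinarith
    _ = _ := by ring

/-- Moment estimate for the state pair: for every `p ≥ 1` there is `C > 0` (depending only
on `p` and the model parameters) such that for every initial condition, every admissible
control and every `t ≥ 0`,
`E[|(k_t,h_t)|^p] ≤ C(1+t^{p-1/2})|(k₀,h₀)|^p exp{p(B + ((2p-1)β₁² + 4pβ₂²)/2)t}`. -/
theorem state_moment_bound (S : Setting Ω) (p : ℝ) (hp : 1 ≤ p) :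
    ∃ C > (0:ℝ), ∀ k₀ h₀ : ℝ, 0 < k₀ → 0 < h₀ → ∀ c : ℝ → Ω → ℝ,
      IsAdmissible S k₀ h₀ c → ∀ t : ℝ, 0 ≤ t →
        (∫⁻ ω, ENNReal.ofReal
            ((Real.sqrt ((kProc S k₀ c t ω) ^ 2 + (hProc S h₀ c t ω) ^ 2)) ^ p) ∂S.P)
          ≤ ENNReal.ofReal (C * (1 + t ^ (p - 1 / 2)) * (Real.sqrt (k₀ ^ 2 + h₀ ^ 2)) ^ p *
              Real.exp (p * (S.B + ((2 * p - 1) * S.β₁ ^ 2 + 4 * p * S.β₂ ^ 2) / 2) * t)) := by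
  have hq : 0 ≤ (S.ρ * S.R) ^ p := Real.rpow_nonneg (mul_pos S.hρ₀ S.hR).le p
  have hp0 : 0 ≤ p := by linarith
  have hb : 0 < S.β₁ ^ 2 := pow_pos S.hβ₁ 2
  refine ⟨3 ^ p * (2 + (S.ρ * S.R) ^ p * (1 + 2 / S.β₁ ^ 2)), by positivity, ?_⟩
  intro k₀ h₀ hk hh c hc t ht
  set n := Real.sqrt (k₀ ^ 2 + h₀ ^ 2) with hn
  have hn0 : 0 ≤ n := Real.sqrt_nonneg _
  have hkn : k₀ ≤ n := Real.le_sqrt_of_sq_le (by nlinarith)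
  have hhn : h₀ ≤ n := Real.le_sqrt_of_sq_le (by nlinarith)
  have hρR : 0 ≤ S.ρ * S.R := (mul_pos S.hρ₀ S.hR).le
  have hM : ∀ s, Measurable fun ω => ENNReal.ofReal (Gk S t s ω ^ p) := by
    intro s
    have := Gk_meas S t s
    fun_prop
  refine le_trans ?_ (ENNReal.ofReal_le_ofReal
    (aux_final S p hp t ht (n ^ p) ((S.ρ * S.R) ^ p) (Real.rpow_nonneg hn0 _) hq))
  set K := (p * S.B + p * (p - 1) / 2 * (S.β₁ ^ 2 + S.β₂ ^ 2)) with hK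
  have pt : ∀ᵐ ω ∂S.P, ENNReal.ofReal
      ((Real.sqrt ((kProc S k₀ c t ω) ^ 2 + (hProc S h₀ c t ω) ^ 2)) ^ p) ≤
      ENNReal.ofReal (3 ^ p * n ^ p) * (ENNReal.ofReal (Gk S t t ω ^ p) +
        (ENNReal.ofReal (Gk S t 0 ω ^ p) + ENNReal.ofReal ((S.ρ * S.R) ^ p) *
          ENNReal.ofReal ((∫ s in (0:ℝ)..t, Gk S t s ω) ^ p))) := by
    filter_upwards [aux_state S k₀ h₀ hk hh c hc t ht] with ω hω
    obtain ⟨a1, a2, a3, a4⟩ := hω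
    have g1 := (Gk_pos S t t ω).le
    have g2 := (Gk_pos S t 0 ω).le
    have g3 : 0 ≤ ∫ s in (0:ℝ)..t, Gk S t s ω :=
      intervalIntegral.integral_nonneg ht fun s _ => (Gk_pos S t s ω).le
    set I := ∫ s in (0:ℝ)..t, Gk S t s ω
    have gI : 0 ≤ S.ρ * S.R * I := mul_nonneg hρR g3
    rw [← ENNReal.ofReal_mul hq, ← ENNReal.ofReal_add (by positivity) (by positivity),
      ← ENNReal.ofReal_add (by positivity) (by positivity), ← ENNReal.ofReal_mul (by positivity)]
    apply ENNReal.ofReal_le_ofReal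
    have b1 : Real.sqrt ((kProc S k₀ c t ω) ^ 2 + (hProc S h₀ c t ω) ^ 2) ≤
        n * (Gk S t t ω + Gk S t 0 ω + S.ρ * S.R * I) := by
      have : Real.sqrt ((kProc S k₀ c t ω) ^ 2 + (hProc S h₀ c t ω) ^ 2) ≤
          kProc S k₀ c t ω + hProc S h₀ c t ω :=
        Real.sqrt_le_iff.2 ⟨by linarith, by nlinarith [mul_nonneg a1 a2]⟩
      have c1 := mul_le_mul_of_nonneg_right hkn g1
      have c2 := mul_le_mul_of_nonneg_right hhn g2
      have c3 := mul_le_mul_of_nonneg_right hkn gI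
      nlinarith
    calc _ ≤ (n * (Gk S t t ω + Gk S t 0 ω + S.ρ * S.R * I)) ^ p :=
          Real.rpow_le_rpow (Real.sqrt_nonneg _) b1 hp0
      _ = n ^ p * (Gk S t t ω + Gk S t 0 ω + S.ρ * S.R * I) ^ p :=
          Real.mul_rpow hn0 (by positivity)
      _ ≤ n ^ p * (3 ^ p * (Gk S t t ω ^ p + Gk S t 0 ω ^ p + (S.ρ * S.R * I) ^ p)) :=
          mul_le_mul_of_nonneg_left (aux_three p hp _ _ _ g1 g2 gI) (Real.rpow_nonneg hn0 _)
      _ = _ := by rw [Real.mul_rpow hρR g3]; ring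
  refine (lintegral_mono_ae pt).trans ?_
  rw [lintegral_const_mul' _ _ ENNReal.ofReal_ne_top, lintegral_add_left (hM t),
    lintegral_add_left (hM 0), lintegral_const_mul' _ _ ENNReal.ofReal_ne_top]
  have m1 := Gk_moment S p hp t t ht le_rfl
  have m2 := Gk_moment S p hp t 0 le_rfl ht
  have m3 := Gint_moment S p hp t ht
  rw [ENNReal.ofReal_mul (p := 3 ^ p * n ^ p) (by positivity), two_mul, add_assoc,
    ENNReal.ofReal_add (by positivity) (by positivity),
    ENNReal.ofReal_add (by positivity) (by positivity), ENNReal.ofReal_mul hq]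
  gcongr

end HabitModel
end
end
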